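/- arXiv:1912.05424 — 2 statements merged into one kernel-verified Lean document; each statement's English description precedes it below -/
import Mathlib

section
/- Let A be a commutative ring, h ∈ A[x] a monic polynomial with h(1) a unit in A, and n ≥ 3. If g ∈ GL_n(A[x]) satisfies that the image of g in GL_n(A[x]_h) lies in E_n(A[x]_h) and g(0) = 1, then g ∈ E_n(A[x]) and in particular g(1) ∈ E_n(A). -/
/-- The elementary subgroup `E_n(R) ⊆ GL_n(R)`. -/
def elemGL (n : ℕ) (R : Type*) [CommRing R] : Subgroup (GL (Fin n) R) :=
  Subgroup.closure {g | ∃ (i j : Fin n) (a : R), i ≠ j ∧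
    (g : Matrix (Fin n) (Fin n) R) = Matrix.transvection i j a}

/-- The homomorphism `GL_n(R) → GL_n(S)` induced by a ring homomorphism. -/
def glMap {n : ℕ} {R S : Type*} [CommRing R] [CommRing S] (f : R →+* S) :
    GL (Fin n) R →* GL (Fin n) S := Units.map (RingHom.mapMatrix f).toMonoidHom

/-!
Since `h` is monic, expansion at infinity `x ↦ y⁻¹` sends it to a unit of `A((y))`, so `g` becomes
elementary over `A((y))`. Quillen patching, which rests on Suslin's theorem that `E_n` is normal in
`GL_n` for `n ≥ 3`, reduces to the case where `A` is local. There every element of `E_n(A((y)))` is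
a product `c D w` with `c ∈ GL_n(A[[y]])`, `D` a diagonal matrix of powers of `y`, and `w` in the
group generated by `E_n(A[y⁻¹])` and the matrices over `A[[y]]` congruent to `1` modulo the maximal
ideal. This group is the product of its two generating subgroups, so `g e = c D p` with
`e ∈ E_n(A[x])` and `p` congruent to `1`. Over the residue field, the uniqueness of the exponents
in a Birkhoff factorization gives `D = 1`. Hence `g e` has entries in both `A[y⁻¹]` and `A[[y]]`,
i.e. it is constant, and `g(x) g(0)⁻¹` is elementary.
-/

namespace MonicLocalization

open Matrix

section Elementary

variable {n : ℕ} {R S T : Type*} [CommRing R] [CommRing S] [CommRing T] {i j : Fin n}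

lemma glMap_apply (f : R →+* S) (g : GL (Fin n) R) (i j : Fin n) : glMap f g i j = f (g i j) :=
  rfl

lemma val_glMap (f : R →+* S) (g : GL (Fin n) R) :
    (glMap f g : Matrix (Fin n) (Fin n) S) = (g : Matrix (Fin n) (Fin n) R).map f :=
  rfl

lemma glMap_glMap (f : S →+* T) (f' : R →+* S) (g : GL (Fin n) R) :
    glMap f (glMap f' g) = glMap (f.comp f') g :=
  rfl

lemma glMap_id (g : GL (Fin n) R) : glMap (RingHom.id R) g = g :=
  rfl

/-- The elementary matrix `1 + a e_{ij}` as an element of `GL_n(R)`. -/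
def transvectionGL (hij : i ≠ j) (a : R) : GL (Fin n) R where
  val := transvection i j a
  inv := transvection i j (-a)
  val_inv := by rw [transvection_mul_transvection_same _ _ hij, add_neg_cancel, transvection_zero]
  inv_val := by rw [transvection_mul_transvection_same _ _ hij, neg_add_cancel, transvection_zero]

lemma val_transvectionGL (hij : i ≠ j) (a : R) :
    (transvectionGL hij a : Matrix (Fin n) (Fin n) R) = transvection i j a :=
  rfl

lemma transvectionGL_inv (hij : i ≠ j) (a : R) :
    (transvectionGL hij a)⁻¹ = transvectionGL hij (-a) :=
  Units.ext rfl

lemma transvectionGL_add (hij : i ≠ j) (a b : R) :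
    transvectionGL hij (a + b) = transvectionGL hij a * transvectionGL hij b :=
  Units.ext (transvection_mul_transvection_same _ _ hij a b).symm

lemma transvectionGL_sub (hij : i ≠ j) (a b : R) :
    transvectionGL hij (a - b) = transvectionGL hij a * (transvectionGL hij b)⁻¹ := by
  rw [sub_eq_add_neg, transvectionGL_add, transvectionGL_inv]

lemma glMap_transvectionGL (f : R →+* S) (hij : i ≠ j) (a : R) :
    glMap f (transvectionGL hij a) = transvectionGL hij (f a) := by
  ext k l
  simp [glMap_apply, val_transvectionGL, transvection, Matrix.single_apply, Matrix.one_apply,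
    apply_ite f]

lemma transvectionGL_mem_elemGL (hij : i ≠ j) (a : R) : transvectionGL hij a ∈ elemGL n R :=
  Subgroup.subset_closure ⟨i, j, a, hij, rfl⟩

lemma elemGL_eq_closure : elemGL n R =
    Subgroup.closure {g | ∃ (i j : Fin n) (hij : i ≠ j) (a : R), transvectionGL hij a = g} := by
  refine congrArg Subgroup.closure (Set.ext fun g => ?_)
  exact ⟨fun ⟨i, j, a, hij, h⟩ => ⟨i, j, hij, a, Units.ext h.symm⟩,
    fun ⟨i, j, hij, a, h⟩ => ⟨i, j, a, hij, h ▸ rfl⟩⟩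

lemma elemGL_le {K : Subgroup (GL (Fin n) R)}
    (hK : ∀ (i j : Fin n) (hij : i ≠ j) (a : R), transvectionGL hij a ∈ K) : elemGL n R ≤ K := by
  rw [elemGL_eq_closure, Subgroup.closure_le]
  rintro _ ⟨i, j, hij, a, rfl⟩
  exact hK i j hij a

@[elab_as_elim]
lemma elemGL_induction_left {p : GL (Fin n) R → Prop} {g : GL (Fin n) R} (hg : g ∈ elemGL n R)
    (one : p 1)
    (mul : ∀ (i j : Fin n) (hij : i ≠ j) (a : R) (x : GL (Fin n) R),
      p x → p (transvectionGL hij a * x)) : p g := by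
  rw [elemGL_eq_closure] at hg
  induction hg using Subgroup.closure_induction_left with
  | one => exact one
  | mul_left x hx y _ ih =>
    obtain ⟨i, j, hij, a, rfl⟩ := hx
    exact mul i j hij a y ih
  | inv_mul_cancel x hx y _ ih =>
    obtain ⟨i, j, hij, a, rfl⟩ := hx
    rw [transvectionGL_inv]
    exact mul i j hij (-a) y ih

@[elab_as_elim]
lemma elemGL_induction_right {p : GL (Fin n) R → Prop} {g : GL (Fin n) R} (hg : g ∈ elemGL n R)
    (one : p 1)
    (mul : ∀ (i j : Fin n) (hij : i ≠ j) (a : R) (x : GL (Fin n) R),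
      p x → p (x * transvectionGL hij a)) : p g := by
  have := elemGL_induction_left (p := fun x => p x⁻¹) (inv_mem hg) (by rwa [inv_one])
    fun i j hij a x hx => by
      rw [_root_.mul_inv_rev, transvectionGL_inv]
      exact mul i j hij (-a) _ hx
  rwa [inv_inv] at this

lemma glMap_mem_elemGL (f : R →+* S) {g : GL (Fin n) R} (hg : g ∈ elemGL n R) :
    glMap f g ∈ elemGL n S := by
  have : elemGL n R ≤ (elemGL n S).comap (glMap f) := elemGL_le fun i j hij a => by
    rw [Subgroup.mem_comap, glMap_transvectionGL]
    exact transvectionGL_mem_elemGL hij _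
  exact this hg

end Elementary

section Suslin

variable {n : ℕ} {R S : Type*} [CommRing R] [CommRing S]

lemma transvection_mul_eq_one_add_vecMulVec (i j : Fin n) (a b : R) :
    transvection i j (a * b) = 1 + vecMulVec (Pi.single i a) (Pi.single j b) := by
  ext k l
  simp [transvection, Matrix.single_apply, vecMulVec_apply, Pi.single_apply, ← ite_and, and_comm,
    eq_comm]

/-- The subgroup `K` of `GL_n(R)` contains the transvection `1 + v ρ`, where the column `v` and
the row `ρ` satisfy `ρ v = 0`. This condition is additive in `v` and in `ρ`. -/
def ContainsTransvection (K : Subgroup (GL (Fin n) R)) (v ρ : Fin n → R) : Prop :=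
  ρ ⬝ᵥ v = 0 ∧ ∃ x ∈ K, (x : Matrix (Fin n) (Fin n) R) = 1 + vecMulVec v ρ

namespace ContainsTransvection

variable {K : Subgroup (GL (Fin n) R)} {v w ρ σ : Fin n → R}

lemma mem (h : ContainsTransvection K v ρ) {x : GL (Fin n) R}
    (hx : (x : Matrix (Fin n) (Fin n) R) = 1 + vecMulVec v ρ) : x ∈ K := by
  obtain ⟨-, y, hy, hyx⟩ := h
  rwa [Units.ext (hx.trans hyx.symm)]

lemma zero_left (K : Subgroup (GL (Fin n) R)) (ρ : Fin n → R) : ContainsTransvection K 0 ρ :=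
  ⟨dotProduct_zero ρ, 1, one_mem K, by simp⟩

lemma zero_right (K : Subgroup (GL (Fin n) R)) (v : Fin n → R) : ContainsTransvection K v 0 :=
  ⟨zero_dotProduct v, 1, one_mem K, by simp⟩

lemma add_left (hv : ContainsTransvection K v ρ) (hw : ContainsTransvection K w ρ) :
    ContainsTransvection K (v + w) ρ := by
  obtain ⟨hρv, x, hx, hxv⟩ := hv
  obtain ⟨hρw, y, hy, hyw⟩ := hw
  refine ⟨by rw [dotProduct_add, hρv, hρw, add_zero], x * y, mul_mem hx hy, ?_⟩
  rw [Units.val_mul, hxv, hyw, add_vecMulVec, mul_add, add_mul, add_mul, vecMulVec_mul_vecMulVec,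
    hρw, zero_smul, vecMulVec_zero]
  simp only [mul_one, one_mul, add_zero, add_assoc]

lemma add_right (hρ : ContainsTransvection K v ρ) (hσ : ContainsTransvection K v σ) :
    ContainsTransvection K v (ρ + σ) := by
  obtain ⟨hρv, x, hx, hxρ⟩ := hρ
  obtain ⟨hσv, y, hy, hyσ⟩ := hσ
  refine ⟨by rw [add_dotProduct, hρv, hσv, add_zero], x * y, mul_mem hx hy, ?_⟩
  rw [Units.val_mul, hxρ, hyσ, vecMulVec_add, mul_add, add_mul, add_mul, vecMulVec_mul_vecMulVec,
    hρv, zero_smul, vecMulVec_zero]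
  simp only [mul_one, one_mul, add_zero, add_assoc]

lemma sum_left {ι : Type*} {s : Finset ι} {v : ι → Fin n → R}
    (h : ∀ a ∈ s, ContainsTransvection K (v a) ρ) : ContainsTransvection K (∑ a ∈ s, v a) ρ :=
  Finset.sum_induction v (ContainsTransvection K · ρ) (fun _ _ => add_left) (zero_left K ρ) h

lemma sum_right {ι : Type*} {s : Finset ι} {ρ : ι → Fin n → R}
    (h : ∀ a ∈ s, ContainsTransvection K v (ρ a)) : ContainsTransvection K v (∑ a ∈ s, ρ a) :=
  Finset.sum_induction ρ (ContainsTransvection K v) (fun _ _ => add_right) (zero_right K v) h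

lemma smul_left {c : R} (hρv : ρ ⬝ᵥ v = 0) (h : ContainsTransvection K v (c • ρ)) :
    ContainsTransvection K (c • v) ρ := by
  obtain ⟨-, x, hx, hxe⟩ := h
  exact ⟨by rw [dotProduct_smul, hρv, smul_zero], x, hx, by
    rw [hxe, vecMulVec_smul, smul_vecMulVec]⟩

lemma map (f : R →+* S) (h : ContainsTransvection K v ρ) :
    ContainsTransvection (K.map (glMap f)) (f ∘ v) (f ∘ ρ) := by
  obtain ⟨hρv, x, hx, hxe⟩ := h
  refine ⟨by rw [← RingHom.map_dotProduct, hρv, map_zero], glMap f x,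
    Subgroup.mem_map_of_mem _ hx, ?_⟩
  rw [val_glMap, hxe]
  ext i j
  simp [vecMulVec_apply, Matrix.one_apply, apply_ite f]

lemma inf_ker (f : R →+* S) (hρ : f ∘ ρ = 0) (h : ContainsTransvection K v ρ) :
    ContainsTransvection (K ⊓ (glMap f).ker) v ρ := by
  obtain ⟨hρv, x, hx, hxe⟩ := h
  refine ⟨hρv, x, ⟨hx, MonoidHom.mem_ker.2 ?_⟩, hxe⟩
  ext i j
  have hρj : f (ρ j) = 0 := congrFun hρ j
  simp [glMap_apply, hxe, vecMulVec_apply, hρj, Matrix.one_apply, apply_ite f]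

lemma single_iff {i j : Fin n} (hij : i ≠ j) {a b : R} :
    ContainsTransvection K (Pi.single i a) (Pi.single j b) ↔ transvectionGL hij (a * b) ∈ K := by
  have hval : (transvectionGL hij (a * b) : Matrix (Fin n) (Fin n) R) =
      1 + vecMulVec (Pi.single i a) (Pi.single j b) :=
    transvection_mul_eq_one_add_vecMulVec i j a b
  exact ⟨fun h => h.mem hval, fun h => ⟨by simp [hij], _, h, hval⟩⟩

lemma of_disjoint (hK : ∀ (i j : Fin n) (hij : i ≠ j), transvectionGL hij (v i * ρ j) ∈ K)
    (hvρ : ∀ i, v i = 0 ∨ ρ i = 0) : ContainsTransvection K v ρ := by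
  rw [← Finset.univ_sum_single v, ← Finset.univ_sum_single ρ]
  refine sum_left fun i _ => sum_right fun j _ => ?_
  by_cases hij : i = j
  · subst hij
    obtain hv | hρ := hvρ i
    · rw [hv, Pi.single_zero]
      exact zero_left K _
    · rw [hρ, Pi.single_zero]
      exact zero_right K _
  · exact (single_iff hij).2 (hK i j hij)

lemma elemGL_of_disjoint (hvρ : ∀ i, v i = 0 ∨ ρ i = 0) :
    ContainsTransvection (elemGL n R) v ρ :=
  of_disjoint (fun _ _ hij => transvectionGL_mem_elemGL hij _) hvρ

lemma commutator (hv : ContainsTransvection K v σ) (hw : ContainsTransvection K w ρ)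
    (hρv : ρ ⬝ᵥ v = 0) (hσw : σ ⬝ᵥ w = 1) : ContainsTransvection K v ρ := by
  obtain ⟨-, x, hx, hxe⟩ := hv
  obtain ⟨hρw, y, hy, hye⟩ := hw
  refine ⟨hρv, x * y * (y * x)⁻¹, mul_mem (mul_mem hx hy) (inv_mem (mul_mem hy hx)), ?_⟩
  rw [Units.val_mul, Units.mul_inv_eq_iff_eq_mul, Units.val_mul, Units.val_mul, hxe, hye]
  simp only [mul_add, add_mul, vecMulVec_mul_vecMulVec, hρv, hσw, hρw, zero_smul, one_smul,
    vecMulVec_zero, mul_one, one_mul, add_zero]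
  abel

end ContainsTransvection

/-- The Koszul syzygy `v_l e_k - v_k e_l` of `v`. -/
def koszul (v : Fin n → R) (k l : Fin n) : Fin n → R :=
  Pi.single k (v l) - Pi.single l (v k)

lemma koszul_dotProduct (v : Fin n → R) (k l : Fin n) : koszul v k l ⬝ᵥ v = 0 := by
  rw [koszul, sub_dotProduct, single_dotProduct, single_dotProduct, mul_comm, sub_self]

lemma koszul_self (v : Fin n → R) (k : Fin n) : koszul v k k = 0 :=
  sub_self _

lemma koszul_apply_of_ne (v : Fin n → R) {i k l : Fin n} (hk : i ≠ k) (hl : i ≠ l) :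
    koszul v k l i = 0 := by
  simp [koszul, hk, hl]

lemma koszul_smul (c : R) (v : Fin n → R) (k l : Fin n) :
    koszul (c • v) k l = c • koszul v k l := by
  simp only [koszul, smul_sub, Pi.smul_apply, Pi.single_smul]

lemma comp_koszul (f : R →+* S) (v : Fin n → R) (k l : Fin n) :
    f ∘ koszul v k l = koszul (f ∘ v) k l := by
  ext i
  simp [koszul, Pi.single_apply, apply_ite f]

lemma sum_smul_koszul {u v w : Fin n → R} (huv : u ⬝ᵥ v = 0) (hwv : w ⬝ᵥ v = 1) :
    ∑ k, ∑ l, (u k * w l) • koszul v k l = u := by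
  have sum_single (k : Fin n) (f : Fin n → R) :
      ∑ l, (Pi.single k (f l) : Fin n → R) = Pi.single k (∑ l, f l) :=
    (map_sum (AddMonoidHom.single (fun _ : Fin n => R) k) f Finset.univ).symm
  have hfst (k : Fin n) :
      ∑ l, (u k * w l) • (Pi.single k (v l) : Fin n → R) = Pi.single k (u k) := by
    simp_rw [← Pi.single_smul, sum_single, smul_eq_mul, mul_assoc, ← Finset.mul_sum]
    rw [← dotProduct, hwv, mul_one]
  have hsnd (l : Fin n) : ∑ k, (u k * w l) • (Pi.single l (v k) : Fin n → R) = 0 := by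
    simp_rw [← Pi.single_smul, sum_single, smul_eq_mul, mul_right_comm, ← Finset.sum_mul]
    rw [← dotProduct, huv, zero_mul, Pi.single_zero]
  simp_rw [koszul, smul_sub, Finset.sum_sub_distrib, hfst]
  rw [Finset.sum_comm, Finset.sum_congr rfl fun l _ => hsnd l, Finset.sum_const_zero, sub_zero,
    Finset.univ_sum_single]

lemma ContainsTransvection.of_koszul {K : Subgroup (GL (Fin n) R)} {u v w : Fin n → R}
    (huv : u ⬝ᵥ v = 0) (hwv : w ⬝ᵥ v = 1)
    (hK : ∀ k l, k ≠ l → ContainsTransvection K v ((u k * w l) • koszul v k l)) :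
    ContainsTransvection K v u := by
  rw [← sum_smul_koszul huv hwv]
  refine sum_right fun k _ => sum_right fun l _ => ?_
  by_cases hkl : k = l
  · rw [hkl, koszul_self, smul_zero]
    exact zero_right K v
  · exact hK k l hkl

/- The part of `v` supported on `{k, l}` is handled by a commutator through a third index; the
rest of `v` has support disjoint from that of the Koszul row. -/
lemma containsTransvection_smul_koszul (hn : 3 ≤ n) (v : Fin n → R) (c : R) {k l : Fin n}
    (hkl : k ≠ l) : ContainsTransvection (elemGL n R) v (c • koszul v k l) := by
  obtain ⟨m, hmk, hml⟩ := Fin.exists_ne_and_ne_of_two_lt k l hn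
  set u : Fin n → R := Pi.single k (v k) + Pi.single l (v l) with hu
  have hum : u m = 0 := by simp [hu, hmk, hml]
  have hv_sub_u (i : Fin n) (hi : i = k ∨ i = l) : (v - u) i = 0 := by
    rcases hi with rfl | rfl <;> simp [hu, hkl, hkl.symm]
  have hρu : (c • koszul v k l) ⬝ᵥ u = 0 := by
    rw [smul_dotProduct, hu, koszul]
    simp [hkl, hkl.symm, mul_comm]
  have huρ : ContainsTransvection (elemGL n R) u (c • koszul v k l) := by
    refine .commutator (σ := Pi.single m 1) (w := Pi.single m 1) (.elemGL_of_disjoint fun i => ?_)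
      (.elemGL_of_disjoint fun i => ?_) hρu (by simp)
    all_goals by_cases him : i = m
    · exact .inl (him ▸ hum)
    · exact .inr (by simp [him])
    · exact .inr (by simp [him, koszul_apply_of_ne v hmk hml])
    · exact .inl (by simp [him])
  have hdisjoint : ContainsTransvection (elemGL n R) (v - u) (c • koszul v k l) := by
    refine .elemGL_of_disjoint fun i => ?_
    by_cases hi : i = k ∨ i = l
    · exact .inl (hv_sub_u i hi)
    · rw [not_or] at hi
      exact .inr (by simp [koszul_apply_of_ne v hi.1 hi.2])
  simpa only [add_sub_cancel] using huρ.add_left hdisjoint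

lemma val_conj_transvectionGL (γ : GL (Fin n) R) {i j : Fin n} (hij : i ≠ j) (a : R) :
    ((γ * transvectionGL hij a * γ⁻¹ : GL (Fin n) R) : Matrix (Fin n) (Fin n) R) =
      1 + vecMulVec (γ.val.col i) (a • γ⁻¹.val.row j) := by
  rw [Units.val_mul, Units.val_mul, val_transvectionGL, ← one_mul a,
    transvection_mul_eq_one_add_vecMulVec, mul_add, add_mul, mul_one, ← Units.val_mul,
    mul_inv_cancel, Units.val_one, mul_vecMulVec, vecMulVec_mul, mulVec_single_one, single_vecMul,
    one_mul]

lemma inv_row_dotProduct_col (γ : GL (Fin n) R) (i j : Fin n) :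
    γ⁻¹.val.row j ⬝ᵥ γ.val.col i = (1 : Matrix (Fin n) (Fin n) R) j i := by
  rw [← Units.val_one, ← inv_mul_cancel γ]
  rfl

lemma conj_transvectionGL_mem {K : Subgroup (GL (Fin n) R)} {γ : GL (Fin n) R} {i j : Fin n}
    (hij : i ≠ j) (a : R)
    (hK : ∀ k l, k ≠ l → ContainsTransvection K (γ.val.col i)
      ((a * γ⁻¹ j k * γ⁻¹ i l) • koszul (γ.val.col i) k l)) :
    γ * transvectionGL hij a * γ⁻¹ ∈ K := by
  refine (ContainsTransvection.of_koszul (u := a • γ⁻¹.val.row j) (w := γ⁻¹.val.row i) ?_ ?_ hK).mem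
    (val_conj_transvectionGL γ hij a)
  · rw [smul_dotProduct, inv_row_dotProduct_col, one_apply_ne hij.symm, smul_zero]
  · rw [inv_row_dotProduct_col, one_apply_eq]

theorem elemGL_normal (hn : 3 ≤ n) : (elemGL n R).Normal where
  conj_mem x hx γ := by
    have : elemGL n R ≤ (elemGL n R).comap (MulAut.conj γ).toMonoidHom :=
      elemGL_le fun i j hij a => conj_transvectionGL_mem hij a fun k l hkl =>
        containsTransvection_smul_koszul hn _ _ hkl
    exact this hx

end Suslin

section Dilation

open Polynomial

variable {n : ℕ} {R S : Type*} [CommRing R] [CommRing S]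

/-- The matrix `g(X) g(0)⁻¹`, which agrees with `g` up to a constant factor and is trivial at
`X = 0`. -/
noncomputable def normalizeAtZero (g : GL (Fin n) R[X]) : GL (Fin n) R[X] :=
  g * (glMap C (glMap (evalRingHom 0) g))⁻¹

lemma evalRingHom_zero_comp_C : (evalRingHom (0 : R)).comp C = RingHom.id R :=
  RingHom.ext fun _ => eval_C

lemma glMap_evalRingHom_zero_glMap_C (γ : GL (Fin n) R) :
    glMap (evalRingHom 0) (glMap C γ) = γ := by
  rw [glMap_glMap, evalRingHom_zero_comp_C, glMap_id]

lemma glMap_evalRingHom_zero_normalizeAtZero (g : GL (Fin n) R[X]) :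
    glMap (evalRingHom 0) (normalizeAtZero g) = 1 := by
  rw [normalizeAtZero, map_mul, map_inv, glMap_evalRingHom_zero_glMap_C, mul_inv_cancel]

lemma normalizeAtZero_of_eval_zero_eq_one {g : GL (Fin n) R[X]}
    (hg : glMap (evalRingHom 0) g = 1) : normalizeAtZero g = g := by
  rw [normalizeAtZero, hg, map_one, inv_one, mul_one]

lemma normalizeAtZero_one : normalizeAtZero (1 : GL (Fin n) R[X]) = 1 :=
  normalizeAtZero_of_eval_zero_eq_one (map_one _)

lemma normalizeAtZero_mul (g x : GL (Fin n) R[X]) :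
    normalizeAtZero (g * x) = normalizeAtZero g *
      (glMap C (glMap (evalRingHom 0) g) * normalizeAtZero x *
        (glMap C (glMap (evalRingHom 0) g))⁻¹) := by
  simp only [normalizeAtZero, map_mul]
  group

lemma normalizeAtZero_mem_elemGL {g : GL (Fin n) R[X]} (hg : g ∈ elemGL n R[X]) :
    normalizeAtZero g ∈ elemGL n R[X] :=
  mul_mem hg (inv_mem (glMap_mem_elemGL _ (glMap_mem_elemGL _ hg)))

lemma normalizeAtZero_transvectionGL {i j : Fin n} (hij : i ≠ j) (a : R[X]) :
    normalizeAtZero (transvectionGL hij a) = transvectionGL hij (a - C (a.eval 0)) := by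
  rw [normalizeAtZero, glMap_transvectionGL, glMap_transvectionGL, coe_evalRingHom,
    transvectionGL_sub]

lemma glMap_normalizeAtZero {F : R[X] →+* S[X]} {f : R →+* S} (hC : F.comp C = C.comp f)
    (h0 : (evalRingHom 0).comp F = f.comp (evalRingHom 0)) (g : GL (Fin n) R[X]) :
    glMap F (normalizeAtZero g) = normalizeAtZero (glMap F g) := by
  simp only [normalizeAtZero, map_mul, map_inv, glMap_glMap]
  rw [← RingHom.comp_assoc, hC, RingHom.comp_assoc, ← h0]

lemma glMap_mapRingHom_normalizeAtZero (f : R →+* S) (g : GL (Fin n) R[X]) :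
    glMap (mapRingHom f) (normalizeAtZero g) = normalizeAtZero (glMap (mapRingHom f) g) :=
  glMap_normalizeAtZero (f := f) (RingHom.ext fun _ => by simp)
    (Polynomial.ringHom_ext (by simp) (by simp)) g

/-- The substitution `X ↦ s X`. -/
noncomputable def scale (s : R) : R[X] →+* R[X] :=
  compRingHom (C s * X)

lemma scale_C (s a : R) : scale s (C a) = C a := by
  simp [scale]

lemma scale_X (s : R) : scale s X = C s * X := by
  simp [scale]

lemma scale_comp_scale (r s : R) : (scale s).comp (scale r) = scale (r * s) :=
  Polynomial.ringHom_ext (fun a => by simp [scale_C]) (by simp [scale_C, scale_X, mul_assoc])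

lemma scale_comp_C (s : R) : (scale s).comp C = C :=
  RingHom.ext (scale_C s)

lemma evalRingHom_zero_comp_scale (s : R) : (evalRingHom 0).comp (scale s) = evalRingHom 0 :=
  Polynomial.ringHom_ext (fun a => by simp [scale_C]) (by simp [scale_X])

lemma mapRingHom_comp_scale (f : R →+* S) (s : R) :
    (mapRingHom f).comp (scale s) = (scale (f s)).comp (mapRingHom f) :=
  Polynomial.ringHom_ext (fun a => by simp [scale_C]) (by simp [scale_X])

lemma glMap_scale_normalizeAtZero (s : R) (g : GL (Fin n) R[X]) :
    glMap (scale s) (normalizeAtZero g) = normalizeAtZero (glMap (scale s) g) :=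
  glMap_normalizeAtZero (f := RingHom.id R) (scale_comp_C s) (evalRingHom_zero_comp_scale s) g

lemma scale_X_mul (s : R) (p : R[X]) : scale s (X * p) = X * scale s (C s * p) := by
  rw [map_mul, map_mul, scale_X, scale_C]
  ring

lemma scale_eq_scale_of_dvd {r s : R} (hrs : r ∣ s) {p q : R[X]} (h : scale r p = scale r q) :
    scale s p = scale s q := by
  obtain ⟨t, rfl⟩ := hrs
  rw [← scale_comp_scale, RingHom.comp_apply, RingHom.comp_apply, h]

lemma X_dvd_of_eval_zero_eq_zero {p : R[X]} (hp : p.eval 0 = 0) : X ∣ p := by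
  rwa [X_dvd_iff, coeff_zero_eq_eval_zero]

/-- The matrices over `S[X]` which lift to elementary matrices over `R[X]` that are trivial at
`X = 0`. -/
noncomputable def elemLifts (n : ℕ) (f : R →+* S) : Subgroup (GL (Fin n) S[X]) :=
  (elemGL n R[X] ⊓ (glMap (evalRingHom 0)).ker).map (glMap (mapRingHom f))

lemma glMap_scale_mem_elemLifts {f : R →+* S} (s : R) {x : GL (Fin n) S[X]}
    (hx : x ∈ elemLifts n f) : glMap (scale (f s)) x ∈ elemLifts n f := by
  obtain ⟨y, ⟨hy, hy0⟩, rfl⟩ := hx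
  refine ⟨glMap (scale s) y, ⟨glMap_mem_elemGL _ hy, ?_⟩, ?_⟩
  · change glMap (evalRingHom 0) (glMap (scale s) y) = 1
    rwa [glMap_glMap, evalRingHom_zero_comp_scale]
  · rw [glMap_glMap, glMap_glMap, mapRingHom_comp_scale]

lemma containsTransvection_elemLifts_smul_koszul (hn : 3 ≤ n) (f : R →+* S) (v : Fin n → R)
    {c : R[X]} (hc : c.eval 0 = 0) {k l : Fin n} (hkl : k ≠ l) :
    ContainsTransvection (elemLifts n f) (fun k => C (f (v k)))
      (c.map f • koszul (fun k => C (f (v k))) k l) := by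
  have hR := ((containsTransvection_smul_koszul hn (fun k => C (v k)) c hkl).inf_ker
    (evalRingHom 0) (funext fun m => by simp [hc])).map (mapRingHom f)
  have hCf : mapRingHom f ∘ (fun k => C (v k)) = fun k => C (f (v k)) :=
    funext fun k => map_C f
  have hkoszul : mapRingHom f ∘ (c • koszul (fun k => C (v k)) k l) =
      c.map f • koszul (fun k => C (f (v k))) k l := by
    rw [← hCf, ← comp_koszul]
    exact funext fun m => Polynomial.map_mul f
  rwa [hCf, hkoszul] at hR

variable (M : Submonoid R) [Algebra R S] [IsLocalization M S]

include M in
lemma exists_eq_mul_algebraMap {ι : Type*} [Finite ι] (w : ι → S) :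
    ∃ (u : S) (v : ι → R), ∀ k, w k = u * algebraMap R S (v k) := by
  obtain ⟨b, hb⟩ := IsLocalization.exist_integer_multiples_of_finite M w
  choose v hv using hb
  obtain ⟨u, hu⟩ := IsLocalization.map_units S b
  refine ⟨↑u⁻¹, v, fun k => ?_⟩
  rw [hv, Algebra.smul_def, ← hu, Units.inv_mul_cancel_left]

lemma exists_map_eq_scale {ι : Type*} [Finite ι] (c : ι → S[X]) (hc : ∀ a, (c a).eval 0 = 0) :
    ∃ s ∈ M, ∃ c' : ι → R[X], ∀ a, (c' a).eval 0 = 0 ∧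
      (c' a).map (algebraMap R S) = scale (algebraMap R S s) (c a) := by
  choose d hd using fun a => X_dvd_of_eval_zero_eq_zero (hc a)
  let _ : Algebra R[X] S[X] := Polynomial.algebra R S
  have : IsLocalization (M.map C) S[X] := Polynomial.isLocalization M S
  obtain ⟨⟨_, s, hs, rfl⟩, hden⟩ := IsLocalization.exist_integer_multiples_of_finite (M.map C) d
  choose d' hd' using hden
  have hd'_map (a : ι) : (d' a).map (algebraMap R S) = C (algebraMap R S s) * d a := by
    simpa [Algebra.smul_def] using hd' a
  refine ⟨s, hs, fun a => X * scale s (d' a), fun a => ⟨by simp, ?_⟩⟩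
  rw [Polynomial.map_mul, map_X, hd a, scale_X_mul, ← hd'_map]
  exact congrArg (X * ·) (RingHom.congr_fun (mapRingHom_comp_scale (algebraMap R S) s) (d' a))

include S in
lemma exists_scale_eq_scale {p q : R[X]} (h0 : p.eval 0 = q.eval 0)
    (hmap : p.map (algebraMap R S) = q.map (algebraMap R S)) :
    ∃ s ∈ M, scale s p = scale s q := by
  let _ : Algebra R[X] S[X] := Polynomial.algebra R S
  have : IsLocalization (M.map C) S[X] := Polynomial.isLocalization M S
  obtain ⟨d, hd⟩ := X_dvd_of_eval_zero_eq_zero (p := p - q) (by rw [eval_sub, h0, sub_self])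
  obtain ⟨⟨_, s, hs, rfl⟩, hsc⟩ := (IsLocalization.eq_iff_exists (M.map C) S[X]).1 hmap
  have hsd : C s * d = 0 := by
    refine isRegular_X.left.mul_left_eq_zero_iff.1 ?_
    rw [mul_left_comm, ← hd, mul_sub, sub_eq_zero]
    exact hsc
  refine ⟨s, hs, sub_eq_zero.1 ?_⟩
  rw [← map_sub, hd, scale_X_mul, hsd, map_zero, mul_zero]

include S in
lemma exists_glMap_scale_eq_glMap_scale {α β : GL (Fin n) R[X]}
    (h0 : glMap (evalRingHom 0) α = glMap (evalRingHom 0) β)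
    (hmap : glMap (mapRingHom (algebraMap R S)) α = glMap (mapRingHom (algebraMap R S)) β) :
    ∃ s ∈ M, glMap (scale s) α = glMap (scale s) β := by
  have hentry (a : Fin n × Fin n) :
      ∃ s ∈ M, scale s (α a.1 a.2) = scale s (β a.1 a.2) :=
    exists_scale_eq_scale M (S := S) (congrArg (fun g : GL (Fin n) R => g a.1 a.2) h0)
      (congrArg (fun g : GL (Fin n) S[X] => g a.1 a.2) hmap)
  choose s hs heq using hentry
  refine ⟨∏ a, s a, prod_mem fun a _ => hs a, Units.ext (Matrix.ext fun i j => ?_)⟩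
  exact scale_eq_scale_of_dvd (Finset.dvd_prod_of_mem s (Finset.mem_univ (i, j))) (heq (i, j))

/- Clearing the denominators of the `i`-th column of `γ` and then those of the coefficients of the
Koszul rows, each Koszul transvection lifts to `R[X]`. -/
lemma exists_glMap_scale_conj_transvectionGL_mem (hn : 3 ≤ n) (γ : GL (Fin n) S) {i j : Fin n}
    (hij : i ≠ j) {f : S[X]} (hf : f.eval 0 = 0) :
    ∃ s ∈ M, glMap (scale (algebraMap R S s))
      (glMap C γ * transvectionGL hij f * (glMap C γ)⁻¹) ∈ elemLifts n (algebraMap R S) := by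
  obtain ⟨u, v, hv⟩ := exists_eq_mul_algebraMap M (γ.val.col i)
  have hcol : (glMap C γ).val.col i = C u • fun k => C (algebraMap R S (v k)) :=
    funext fun k => (congrArg C (hv k)).trans C_mul
  obtain ⟨s, hs, c, hc⟩ := exists_map_eq_scale M
    (fun a : Fin n × Fin n => f * C (γ⁻¹ j a.1 * γ⁻¹ i a.2 * u * u)) fun a => by
      rw [eval_mul, hf, zero_mul]
  refine ⟨s, hs, ?_⟩
  rw [map_mul, map_mul, map_inv, glMap_glMap, scale_comp_C, glMap_transvectionGL]
  refine conj_transvectionGL_mem hij _ fun k l hkl => ?_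
  have hlift := containsTransvection_elemLifts_smul_koszul hn (algebraMap R S) v (hc (k, l)).1 hkl
  rw [hcol, koszul_smul]
  refine .smul_left ?_ ?_
  · rw [smul_dotProduct, smul_dotProduct, koszul_dotProduct, smul_zero, smul_zero]
  · rw [(hc (k, l)).2, map_mul, scale_C] at hlift
    convert hlift using 1
    rw [smul_smul, smul_smul, ← map_inv, glMap_apply, glMap_apply]
    simp only [C_mul]
    congr 1
    ring

lemma exists_glMap_scale_normalizeAtZero_mem_elemLifts (hn : 3 ≤ n) {δ : GL (Fin n) S[X]}
    (hδ : δ ∈ elemGL n S[X]) : ∃ s ∈ M,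
      glMap (scale (algebraMap R S s)) (normalizeAtZero δ) ∈ elemLifts n (algebraMap R S) := by
  refine elemGL_induction_right hδ ?_ fun i j hij a x ih => ?_
  · exact ⟨1, one_mem M, by rw [normalizeAtZero_one, map_one]; exact one_mem _⟩
  · obtain ⟨s, hs, hx⟩ := ih
    obtain ⟨r, hr, ha⟩ := exists_glMap_scale_conj_transvectionGL_mem M hn
      (glMap (evalRingHom 0) x) hij (f := a - C (a.eval 0)) (by simp)
    refine ⟨s * r, mul_mem hs hr, ?_⟩
    rw [normalizeAtZero_mul, normalizeAtZero_transvectionGL, map_mul]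
    refine mul_mem ?_ ?_
    · rw [map_mul (algebraMap R S), ← scale_comp_scale, ← glMap_glMap]
      exact glMap_scale_mem_elemLifts r hx
    · rw [mul_comm s r, map_mul (algebraMap R S), ← scale_comp_scale, ← glMap_glMap]
      exact glMap_scale_mem_elemLifts s ha

theorem exists_glMap_scale_normalizeAtZero_mem_elemGL (hn : 3 ≤ n) (α : GL (Fin n) R[X])
    (hα : normalizeAtZero (glMap (mapRingHom (algebraMap R S)) α) ∈ elemGL n S[X]) :
    ∃ s ∈ M, glMap (scale s) (normalizeAtZero α) ∈ elemGL n R[X] := by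
  obtain ⟨s, hs, β, ⟨hβ, hβ0⟩, hαβ⟩ := exists_glMap_scale_normalizeAtZero_mem_elemLifts M hn hα
  rw [normalizeAtZero_of_eval_zero_eq_one (glMap_evalRingHom_zero_normalizeAtZero _),
    ← glMap_mapRingHom_normalizeAtZero, glMap_glMap, ← mapRingHom_comp_scale, ← glMap_glMap] at hαβ
  obtain ⟨r, hr, hrβ⟩ := exists_glMap_scale_eq_glMap_scale M (S := S)
    (by rw [glMap_scale_normalizeAtZero, glMap_evalRingHom_zero_normalizeAtZero]; exact hβ0) hαβ
  refine ⟨s * r, mul_mem hs hr, ?_⟩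
  rw [← scale_comp_scale, ← glMap_glMap, ← hrβ]
  exact glMap_mem_elemGL _ hβ

end Dilation

section LocalGlobal

open Polynomial

variable {n : ℕ} {R S : Type*} [CommRing R] [CommRing S]

/-- The substitution `X ↦ X + c Y`, where the inner variable of `R[X][X]` is `X` and the outer one
is `Y`. -/
noncomputable def shift (c : R) : R[X] →+* R[X][X] :=
  eval₂RingHom (C.comp C) (C X + C (C c) * X)

lemma shift_C (c a : R) : shift c (C a) = C (C a) := by
  simp [shift]

lemma shift_X (c : R) : shift c X = C X + C (C c) * X := by
  simp [shift]

lemma shift_zero : shift (0 : R) = C :=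
  Polynomial.ringHom_ext (shift_C 0) (by simp [shift_X])

lemma scale_comp_shift (c r : R) : (scale (C r)).comp (shift c) = shift (r * c) :=
  Polynomial.ringHom_ext (fun a => by simp [shift_C, scale_C])
    (by simp only [RingHom.comp_apply, shift_X, map_add, map_mul, scale_C, scale_X]; ring)

lemma evalRingHom_zero_comp_shift (c : R) : (evalRingHom 0).comp (shift c) = RingHom.id R[X] :=
  Polynomial.ringHom_ext (fun a => by simp [shift_C]) (by simp [shift_X])

lemma mapRingHom_evalRingHom_zero_comp_shift_one :
    (mapRingHom (evalRingHom (0 : R))).comp (shift 1) = RingHom.id R[X] :=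
  Polynomial.ringHom_ext (fun a => by simp [shift_C]) (by simp [shift_X])

lemma mapRingHom_mapRingHom_comp_shift (f : R →+* S) (c : R) :
    (mapRingHom (mapRingHom f)).comp (shift c) = (shift (f c)).comp (mapRingHom f) :=
  Polynomial.ringHom_ext (fun a => by simp [shift_C]) (by simp [shift_X])

lemma eval₂RingHom_shift_comp_shift (c d : R) :
    (eval₂RingHom (shift d) X).comp (shift c) = shift (c + d) :=
  Polynomial.ringHom_ext (fun a => by simp [shift_C]) (by simp [shift_X, shift_C]; ring)

lemma normalizeAtZero_glMap_shift (c : R) (g : GL (Fin n) R[X]) :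
    normalizeAtZero (glMap (shift c) g) = glMap (shift c) g * (glMap C g)⁻¹ := by
  rw [normalizeAtZero, glMap_glMap (evalRingHom (0 : R[X])), evalRingHom_zero_comp_shift, glMap_id]

lemma normalizeAtZero_mul_glMap_C (g : GL (Fin n) R[X]) (γ : GL (Fin n) R) :
    normalizeAtZero (g * glMap C γ) = normalizeAtZero g := by
  have hγ : normalizeAtZero (glMap C γ) = 1 := by
    rw [normalizeAtZero, glMap_evalRingHom_zero_glMap_C, mul_inv_cancel]
  rw [normalizeAtZero_mul, hγ, mul_one, mul_inv_cancel, mul_one]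

lemma normalizeAtZero_mul_glMap_C_eval_zero (g : GL (Fin n) R[X]) :
    normalizeAtZero g * glMap C (glMap (evalRingHom 0) g) = g :=
  inv_mul_cancel_right _ _

lemma normalizeAtZero_glMap_shift_normalizeAtZero (c : R) (g : GL (Fin n) R[X]) :
    normalizeAtZero (glMap (shift c) (normalizeAtZero g)) =
      normalizeAtZero (glMap (shift c) g) := by
  have hC : (shift c).comp C = (C : R[X] →+* R[X][X]).comp C := RingHom.ext (shift_C c)
  conv_rhs => rw [← normalizeAtZero_mul_glMap_C_eval_zero g]
  rw [map_mul, glMap_glMap, hC, ← glMap_glMap, normalizeAtZero_mul_glMap_C]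

/-- The ideal of those `c` for which `g(X + c Y) g(X)⁻¹` is elementary; if it contains `1`, then
setting `X = 0` shows that `g(Y) g(0)⁻¹` is elementary. -/
noncomputable def quillenIdeal (g : GL (Fin n) R[X]) : Ideal R where
  carrier := {c | normalizeAtZero (glMap (shift c) g) ∈ elemGL n R[X][X]}
  zero_mem' := by
    rw [Set.mem_ofPred_eq, normalizeAtZero_glMap_shift, shift_zero, mul_inv_cancel]
    exact one_mem _
  add_mem' {c d} hc hd := by
    have hadd : normalizeAtZero (glMap (shift (c + d)) g) =
        glMap (eval₂RingHom (shift d) X) (normalizeAtZero (glMap (shift c) g)) *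
          normalizeAtZero (glMap (shift d) g) := by
      have hC : (eval₂RingHom (shift d) X).comp C = shift d := RingHom.ext fun _ => by simp
      simp only [normalizeAtZero_glMap_shift, map_mul, map_inv, glMap_glMap, hC,
        eval₂RingHom_shift_comp_shift]
      rw [mul_assoc, inv_mul_cancel_left]
    rw [Set.mem_ofPred_eq, hadd]
    exact mul_mem (glMap_mem_elemGL _ hc) hd
  smul_mem' r c hc := by
    rw [Set.mem_ofPred_eq, smul_eq_mul, ← scale_comp_shift, ← glMap_glMap,
      ← glMap_scale_normalizeAtZero]
    exact glMap_mem_elemGL _ hc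

lemma mem_quillenIdeal {g : GL (Fin n) R[X]} {c : R} :
    c ∈ quillenIdeal g ↔ normalizeAtZero (glMap (shift c) g) ∈ elemGL n R[X][X] :=
  Iff.rfl

lemma exists_mem_quillenIdeal (hn : 3 ≤ n) (M : Submonoid R) [Algebra R S] [IsLocalization M S]
    {g : GL (Fin n) R[X]}
    (hg : normalizeAtZero (glMap (mapRingHom (algebraMap R S)) g) ∈ elemGL n S[X]) :
    ∃ s ∈ M, s ∈ quillenIdeal g := by
  let _ : Algebra R[X] S[X] := Polynomial.algebra R S
  have : IsLocalization (M.map C) S[X] := Polynomial.isLocalization M S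
  have hshift : normalizeAtZero (glMap (mapRingHom (algebraMap R[X] S[X])) (glMap (shift 1) g)) ∈
      elemGL n S[X][X] := by
    change normalizeAtZero (glMap ((mapRingHom (mapRingHom (algebraMap R S))).comp (shift 1)) g) ∈ _
    rw [mapRingHom_mapRingHom_comp_shift, ← glMap_glMap,
      ← normalizeAtZero_glMap_shift_normalizeAtZero]
    exact normalizeAtZero_mem_elemGL (glMap_mem_elemGL _ hg)
  obtain ⟨_, ⟨s, hs, rfl⟩, hmem⟩ :=
    exists_glMap_scale_normalizeAtZero_mem_elemGL (M.map C) hn (glMap (shift 1) g) hshift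
  rw [glMap_scale_normalizeAtZero, glMap_glMap] at hmem
  refine ⟨s, hs, ?_⟩
  rwa [mem_quillenIdeal, ← mul_one s, ← scale_comp_shift]

theorem normalizeAtZero_mem_elemGL_of_localization_maximal (hn : 3 ≤ n) (g : GL (Fin n) R[X])
    (h : ∀ (m : Ideal R) [m.IsMaximal],
      normalizeAtZero (glMap (mapRingHom (algebraMap R (Localization.AtPrime m))) g) ∈
        elemGL n (Localization.AtPrime m)[X]) :
    normalizeAtZero g ∈ elemGL n R[X] := by
  have htop : quillenIdeal g = ⊤ := by
    by_contra hne
    obtain ⟨m, hm, hle⟩ := Ideal.exists_le_maximal _ hne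
    obtain ⟨s, hsm, hs⟩ := exists_mem_quillenIdeal hn m.primeCompl (h m)
    exact hsm (hle hs)
  have hone : normalizeAtZero (glMap (shift 1) g) ∈ elemGL n R[X][X] :=
    mem_quillenIdeal.1 ((Ideal.eq_top_iff_one _).1 htop)
  have heval := glMap_mem_elemGL (mapRingHom (evalRingHom 0)) hone
  have hC : (mapRingHom (evalRingHom (0 : R))).comp C = C.comp (evalRingHom 0) :=
    RingHom.ext fun p => by simp
  rwa [normalizeAtZero_glMap_shift, map_mul, map_inv, glMap_glMap, glMap_glMap,
    mapRingHom_evalRingHom_zero_comp_shift_one, hC, ← glMap_glMap, glMap_id] at heval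

end LocalGlobal

section LaurentSeries

open Polynomial (monomial eval₂RingHom)
open HahnSeries (ofPowerSeries)
open scoped LaurentSeries

variable {R S : Type*} [CommRing R] [CommRing S]

/-- The expansion of polynomials at infinity, i.e. the ring homomorphism `R[x] → R((y))` sending
`x` to `y⁻¹`. -/
noncomputable def expandAtInfinity (R : Type*) [CommRing R] : Polynomial R →+* R⸨X⸩ :=
  eval₂RingHom HahnSeries.C (HahnSeries.single (-1) 1)

lemma expandAtInfinity_monomial (k : ℕ) (a : R) :
    expandAtInfinity R (monomial k a) = HahnSeries.single (-(k : ℤ)) a := by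
  simp [expandAtInfinity, HahnSeries.C_apply, HahnSeries.single_pow]

lemma expandAtInfinity_C (a : R) : expandAtInfinity R (Polynomial.C a) = HahnSeries.C a := by
  simp [expandAtInfinity]

lemma expandAtInfinity_comp_C : (expandAtInfinity R).comp Polynomial.C =
    (ofPowerSeries ℤ R).comp PowerSeries.C :=
  RingHom.ext fun a => (expandAtInfinity_C a).trans (HahnSeries.ofPowerSeries_C a).symm

lemma coeff_expandAtInfinity (f : Polynomial R) (k : ℕ) :
    (expandAtInfinity R f).coeff (-k) = f.coeff k := by
  induction f using Polynomial.induction_on' with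
  | add p q hp hq => rw [map_add, HahnSeries.coeff_add, hp, hq, Polynomial.coeff_add]
  | monomial m a =>
    rw [expandAtInfinity_monomial, HahnSeries.coeff_single, Polynomial.coeff_monomial]
    simp [eq_comm]

lemma coeff_ofPowerSeries_of_neg (p : PowerSeries R) {k : ℤ} (hk : k < 0) :
    (ofPowerSeries ℤ R p).coeff k = 0 := by
  rw [PowerSeries.coeff_coe, if_pos hk]

lemma eq_C_of_expandAtInfinity_eq_ofPowerSeries {f : Polynomial R} {p : PowerSeries R}
    (h : expandAtInfinity R f = ofPowerSeries ℤ R p) : f = Polynomial.C (f.coeff 0) := by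
  refine Polynomial.eq_C_of_natDegree_eq_zero (Nat.le_zero.1 ?_)
  refine Polynomial.natDegree_le_iff_coeff_eq_zero.2 fun k hk => ?_
  rw [← coeff_expandAtInfinity, h, coeff_ofPowerSeries_of_neg p (by lia)]

lemma eq_zero_of_expandAtInfinity_eq_ofPowerSeries_mul_single {f : Polynomial R}
    {p : PowerSeries R} {d : ℤ} (hd : 0 < d)
    (h : expandAtInfinity R f = ofPowerSeries ℤ R p * HahnSeries.single d 1) : f = 0 := by
  ext k
  rw [← coeff_expandAtInfinity, h, HahnSeries.coeff_mul_single, mul_one,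
    coeff_ofPowerSeries_of_neg p (by lia), Polynomial.coeff_zero]

lemma isUnit_expandAtInfinity_of_monic {f : Polynomial R} (hf : f.Monic) :
    IsUnit (expandAtInfinity R f) := by
  nontriviality R
  have hcoeff : (expandAtInfinity R f).coeff (-f.natDegree) = 1 := by
    rw [coeff_expandAtInfinity, hf.coeff_natDegree]
  have hne : expandAtInfinity R f ≠ 0 := fun h0 => by simp [h0] at hcoeff
  have horder : (expandAtInfinity R f).order = -f.natDegree := by
    refine le_antisymm (HahnSeries.order_le_of_coeff_ne_zero (hcoeff ▸ one_ne_zero))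
      ((HahnSeries.le_order_iff_forall hne).2 fun k hk => ?_)
    obtain ⟨m, rfl⟩ : ∃ m : ℕ, k = -m := ⟨k.natAbs, by lia⟩
    rw [coeff_expandAtInfinity, Polynomial.coeff_eq_zero_of_natDegree_lt (by lia)]
  refine HahnSeries.isUnit_of_isUnit_leadingCoeff_AddUnitOrder ?_ (AddGroup.isAddUnit _)
  rw [HahnSeries.leadingCoeff_eq, horder, hcoeff]
  exact isUnit_one

/-- The ring homomorphism `R((y)) → S((y))` applying `f : R → S` to the coefficients. -/
noncomputable def mapLaurentSeries (f : R →+* S) : R⸨X⸩ →+* S⸨X⸩ where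
  toFun x := x.map f
  map_one' := HahnSeries.map_one f.toMonoidWithZeroHom
  map_mul' _ _ := HahnSeries.map_mul f.toNonUnitalRingHom
  map_zero' := HahnSeries.map_zero f.toAddMonoidHom.toZeroHom
  map_add' _ _ := HahnSeries.map_add f.toAddMonoidHom

lemma mapLaurentSeries_single (f : R →+* S) (d : ℤ) (a : R) :
    mapLaurentSeries f (HahnSeries.single d a) = HahnSeries.single d (f a) :=
  HahnSeries.map_single f.toAddMonoidHom.toZeroHom

lemma mapLaurentSeries_comp_ofPowerSeries (f : R →+* S) :
    (mapLaurentSeries f).comp (ofPowerSeries ℤ R) =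
      (ofPowerSeries ℤ S).comp (PowerSeries.map f) := by
  ext p k
  change f ((ofPowerSeries ℤ R p).coeff k) = (ofPowerSeries ℤ S (PowerSeries.map f p)).coeff k
  rw [PowerSeries.coeff_coe, PowerSeries.coeff_coe, apply_ite f, map_zero,
    PowerSeries.coeff_map]

lemma mapLaurentSeries_comp_expandAtInfinity (f : R →+* S) :
    (mapLaurentSeries f).comp (expandAtInfinity R) =
      (expandAtInfinity S).comp (Polynomial.mapRingHom f) := by
  refine RingHom.ext fun p => ?_
  induction p using Polynomial.induction_on' with
  | add p q hp hq => rw [map_add, map_add, hp, hq]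
  | monomial k a =>
    simp [expandAtInfinity_monomial, mapLaurentSeries_single, Polynomial.map_monomial]

end LaurentSeries

section CongruenceSubgroup

open HahnSeries (ofPowerSeries)
open IsLocalRing (residue)
open scoped LaurentSeries Pointwise

lemma coe_sup_closure_subset {G : Type*} [Group G] {H : Subgroup G} {T : Set G}
    (hinv : ∀ t ∈ T, t⁻¹ ∈ T)
    (hT : ∀ t ∈ T, ∀ x ∈ H, t * x ∈ (H : Set G) * (Subgroup.closure T : Set G)) :
    ((H ⊔ Subgroup.closure T : Subgroup G) : Set G) ⊆ H * (Subgroup.closure T : Set G) := by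
  have hstep : ∀ s ∈ (H : Set G) ∪ T, ∀ z ∈ (H : Set G) * (Subgroup.closure T : Set G),
      s * z ∈ (H : Set G) * (Subgroup.closure T : Set G) := by
    rintro s (hs | hs) _ ⟨x, hx, e, he, rfl⟩
    · exact ⟨s * x, mul_mem hs hx, e, he, mul_assoc s x e⟩
    · obtain ⟨x', hx', e', he', hsx⟩ := hT s hs x hx
      exact ⟨x', hx', e' * e, mul_mem he' he, by
        simp only at hsx ⊢
        rw [← mul_assoc, hsx, mul_assoc]⟩
  have hsymm : ∀ s ∈ (H : Set G) ∪ T, s⁻¹ ∈ (H : Set G) ∪ T := by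
    rintro s (hs | hs)
    · exact .inl (inv_mem hs)
    · exact .inr (hinv s hs)
  intro z hz
  rw [SetLike.mem_coe, ← Subgroup.closure_eq H, ← Subgroup.closure_union] at hz
  induction hz using Subgroup.closure_induction_left with
  | one => exact ⟨1, one_mem H, 1, one_mem _, mul_one 1⟩
  | mul_left s hs z _ ih => exact hstep s hs z ih
  | inv_mul_cancel s hs z _ ih => exact hstep _ (hsymm s hs) z ih

section

variable {n : ℕ} {R S : Type*} [CommRing R] [CommRing S] {i j : Fin n}

lemma elemGL_polynomial_eq_closure (hn : 3 ≤ n) : elemGL n (Polynomial R) =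
    Subgroup.closure {g | ∃ (i j : Fin n) (hij : i ≠ j) (f : Polynomial R),
      f.natDegree ≤ 1 ∧ transvectionGL hij f = g} := by
  set K := Subgroup.closure {g | ∃ (i j : Fin n) (hij : i ≠ j) (f : Polynomial R),
      f.natDegree ≤ 1 ∧ transvectionGL hij f = g}
  have hlinear {i j : Fin n} (hij : i ≠ j) {f : Polynomial R} (hf : f.natDegree ≤ 1) :
      transvectionGL hij f ∈ K := Subgroup.subset_closure ⟨i, j, hij, f, hf, rfl⟩
  refine le_antisymm (elemGL_le fun i j hij f => ?_) ((Subgroup.closure_le _).2 ?_)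
  · induction f using Polynomial.induction_on generalizing i j with
    | C a => exact hlinear hij (by simp)
    | add p q hp hq =>
      rw [transvectionGL_add]
      exact mul_mem (hp i j hij) (hq i j hij)
    | monomial k a ih =>
      obtain ⟨l, hli, hlj⟩ := Fin.exists_ne_and_ne_of_two_lt i j hn
      rw [pow_succ, ← mul_assoc, ← ContainsTransvection.single_iff]
      refine .commutator (σ := Pi.single l 1) (w := Pi.single l 1)
        ((ContainsTransvection.single_iff hli.symm).2 ?_)
        ((ContainsTransvection.single_iff hlj).2 ?_) (by simp [hij]) (by simp)
      · rw [mul_one]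
        exact ih i l hli.symm
      · rw [one_mul]
        exact hlinear hlj Polynomial.natDegree_X_le
  · rintro _ ⟨i, j, hij, f, -, rfl⟩
    exact transvectionGL_mem_elemGL hij f

lemma map_elemGL_polynomial_eq_closure (hn : 3 ≤ n) (φ : Polynomial R →+* S) :
    (elemGL n (Polynomial R)).map (glMap φ) =
      Subgroup.closure {g | ∃ (i j : Fin n) (hij : i ≠ j) (f : Polynomial R),
        f.natDegree ≤ 1 ∧ transvectionGL hij (φ f) = g} := by
  rw [elemGL_polynomial_eq_closure hn, MonoidHom.map_closure]
  refine congrArg Subgroup.closure (Set.ext fun g => ⟨?_, ?_⟩)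
  · rintro ⟨_, ⟨i, j, hij, f, hf, rfl⟩, rfl⟩
    exact ⟨i, j, hij, f, hf, (glMap_transvectionGL φ hij f).symm⟩
  · rintro ⟨i, j, hij, f, hf, rfl⟩
    exact ⟨_, ⟨i, j, hij, f, hf, rfl⟩, glMap_transvectionGL φ hij f⟩

lemma transvection_mul_one_add_smul_mul_transvection (hij : i ≠ j) (D : Matrix (Fin n) (Fin n) R)
    {x y a a' b d : R} (hxy : x * y = 1) (hD : D j i = b + y * d) (ha : a = (1 + a * b) * a') :
    transvection i j (a * x) * (1 + y • D) * transvection i j (-(a' * x)) =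
      1 + y • D + Matrix.single i j a * D - D * Matrix.single i j a' -
        Matrix.single i j (a * a' * d) := by
  have hscale (c : R) : Matrix.single i j (c * x) = x • Matrix.single i j c := by
    rw [Matrix.smul_single, smul_eq_mul, mul_comm]
  have hcancel (M : Matrix (Fin n) (Fin n) R) : x • y • M = M := by
    rw [smul_smul, hxy, one_smul]
  have hcorner : Matrix.single i j (a * x) * (1 + y • D) * Matrix.single i j (a' * x) =
      Matrix.single i j (a * x - a' * x + a * a' * d) := by
    rw [mul_add, add_mul, mul_one, Matrix.single_mul_single_of_ne _ _ _ _ hij.symm, zero_add,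
      Matrix.single_mul_mul_single, Matrix.smul_apply, smul_eq_mul, hD]
    congr 1
    linear_combination (a * a' * x * b + a * a' * d * (1 + x * y)) * hxy - x * ha
  have hleft : Matrix.single i j (a * x) * (1 + y • D) =
      Matrix.single i j (a * x) + Matrix.single i j a * D := by
    rw [mul_add, mul_one, hscale, smul_mul_assoc, mul_smul_comm, hcancel]
  have hright : (1 + y • D) * Matrix.single i j (a' * x) =
      Matrix.single i j (a' * x) + D * Matrix.single i j a' := by
    rw [add_mul, one_mul, hscale, mul_smul_comm, smul_mul_assoc, hcancel]
  rw [transvection, transvection, ← Matrix.single_neg, add_mul, one_mul, ← sub_eq_add_neg, mul_sub,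
    mul_one, add_mul, hcorner, hleft, hright, Matrix.single_add, sub_eq_add_neg (a * x),
    Matrix.single_add, ← Matrix.single_neg]
  abel

end

variable {n : ℕ} {R S A : Type*} [CommRing R] [CommRing S] [CommRing A] [IsLocalRing A]
  {i j : Fin n}

lemma exists_eq_C_add_X_mul_of_map_eq_C {f : R →+* S} {p : PowerSeries R} {s : S}
    (h : PowerSeries.map f p = PowerSeries.C s) :
    ∃ q, p = PowerSeries.C (PowerSeries.constantCoeff p) + PowerSeries.X * q ∧
      PowerSeries.map f q = 0 := by
  refine ⟨_, (PowerSeries.eq_X_mul_shift_add_const p).trans (add_comm _ _), ?_⟩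
  ext k
  rw [PowerSeries.coeff_map, PowerSeries.coeff_mk, ← PowerSeries.coeff_map, h,
    PowerSeries.coeff_succ_C, map_zero]

lemma one_apply_eq_powerSeries_C (k l : Fin n) : (1 : Matrix (Fin n) (Fin n) (PowerSeries R)) k l =
    PowerSeries.C ((1 : Matrix (Fin n) (Fin n) R) k l) :=
  (congrFun₂ (Matrix.map_one PowerSeries.C (map_zero _) (map_one _)) k l).symm

lemma exists_one_add_X_smul {f : R →+* S} {P : Matrix (Fin n) (Fin n) (PowerSeries R)}
    (hP : P.map (PowerSeries.map f) = 1) (hP0 : P.map PowerSeries.constantCoeff = 1) :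
    ∃ D : Matrix (Fin n) (Fin n) (PowerSeries R),
      P = 1 + (PowerSeries.X : PowerSeries R) • D ∧ D.map (PowerSeries.map f) = 0 := by
  have hD (k l : Fin n) :=
    exists_eq_C_add_X_mul_of_map_eq_C ((congrFun₂ hP k l).trans (one_apply_eq_powerSeries_C k l))
  choose D hPD hD using hD
  refine ⟨D, Matrix.ext fun k l => ?_, Matrix.ext hD⟩
  have h0 : PowerSeries.constantCoeff (P k l) = (1 : Matrix (Fin n) (Fin n) R) k l :=
    congrFun₂ hP0 k l
  rw [hPD, h0, ← one_apply_eq_powerSeries_C]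
  rfl

variable (n A) in
/-- The image in `GL_n(A((y)))` of the matrices over `A[[y]]` congruent to `1` modulo the maximal
ideal of the local ring `A`. -/
noncomputable def congruenceSubgroup : Subgroup (GL (Fin n) A⸨X⸩) :=
  (glMap (PowerSeries.map (residue A))).ker.map (glMap (ofPowerSeries ℤ A))

lemma mem_congruenceSubgroup {M : GL (Fin n) A⸨X⸩} {N : Matrix (Fin n) (Fin n) (PowerSeries A)}
    (hM : (M : Matrix (Fin n) (Fin n) A⸨X⸩) = N.map (ofPowerSeries ℤ A))
    (hN : N.map (PowerSeries.map (residue A)) = 1) : M ∈ congruenceSubgroup n A := by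
  have hdet : PowerSeries.map (residue A) N.det = 1 := by
    rw [RingHom.map_det, RingHom.mapMatrix_apply, hN, det_one]
  have hunit : IsUnit N := by
    rw [Matrix.isUnit_iff_isUnit_det]
    exact isUnit_of_map_unit (PowerSeries.map (residue A)) _ (hdet ▸ isUnit_one)
  obtain ⟨N, rfl⟩ := hunit
  exact ⟨N, MonoidHom.mem_ker.2 (Units.ext hN), Units.ext hM.symm⟩

/- Writing `P = 1 + y D`, the conjugation below introduces a single term with a denominator, namely
`(a - a' - a a' D_ji(0)) y⁻¹ e_ij`, and `a'` is chosen to cancel it. -/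
lemma exists_transvectionGL_mul_mul_inv_mem_congruenceSubgroup (hij : i ≠ j) (a : A)
    {P : GL (Fin n) (PowerSeries A)} (hP : glMap (PowerSeries.map (residue A)) P = 1)
    (hP0 : glMap PowerSeries.constantCoeff P = 1) :
    ∃ a' : A, transvectionGL hij (HahnSeries.single (-1) a) * glMap (ofPowerSeries ℤ A) P *
      (transvectionGL hij (HahnSeries.single (-1) a'))⁻¹ ∈ congruenceSubgroup n A := by
  obtain ⟨D, hPD, hD⟩ := exists_one_add_X_smul (congrArg Units.val hP) (congrArg Units.val hP0)
  have hDji : PowerSeries.map (residue A) (D j i) = PowerSeries.C 0 :=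
    (congrFun₂ hD j i).trans (map_zero _).symm
  have hb : residue A (PowerSeries.constantCoeff (D j i)) = 0 := by
    simpa using congrArg (PowerSeries.coeff 0) hDji
  obtain ⟨d, hd, hd0⟩ := exists_eq_C_add_X_mul_of_map_eq_C hDji
  set b := PowerSeries.constantCoeff (D j i)
  have hunit : IsUnit (1 + a * b) := isUnit_of_map_unit (residue A) _ (by simp [hb])
  obtain ⟨a', ha'⟩ : 1 + a * b ∣ a := hunit.dvd
  have hsingle (c : A) : HahnSeries.single (-1 : ℤ) c =
      HahnSeries.C c * HahnSeries.single (-1 : ℤ) 1 := by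
    simp [HahnSeries.C_apply]
  have hconj := transvection_mul_one_add_smul_mul_transvection hij (D.map (ofPowerSeries ℤ A))
    (x := HahnSeries.single (-1 : ℤ) 1) (y := HahnSeries.single 1 1) (a := HahnSeries.C a)
    (a' := HahnSeries.C a') (b := HahnSeries.C b) (d := ofPowerSeries ℤ A d)
    (by simp [HahnSeries.single_mul_single])
    (by rw [Matrix.map_apply, hd, map_add, map_mul, HahnSeries.ofPowerSeries_C,
      HahnSeries.ofPowerSeries_X])
    (by rw [← map_one HahnSeries.C, ← map_mul, ← map_add, ← map_mul, ← ha'])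
  refine ⟨a', mem_congruenceSubgroup (N := 1 + (PowerSeries.X : PowerSeries A) • D +
    Matrix.single i j (PowerSeries.C a) * D - D * Matrix.single i j (PowerSeries.C a') -
      Matrix.single i j (PowerSeries.C a * PowerSeries.C a' * d)) ?_ ?_⟩
  · rw [transvectionGL_inv, Units.val_mul, Units.val_mul, val_transvectionGL, val_transvectionGL,
      val_glMap, hPD, hsingle a, hsingle a']
    simpa [Matrix.map_add, Matrix.map_sub, Matrix.map_mul, Matrix.map_smul', Matrix.map_single,
      HahnSeries.ofPowerSeries_C, HahnSeries.ofPowerSeries_X] using hconj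
  · simp [Matrix.map_add, Matrix.map_sub, Matrix.map_mul, Matrix.map_smul', Matrix.map_single, hD,
      hd0]

lemma conj_mem_congruenceSubgroup (Q : GL (Fin n) (PowerSeries A)) {p : GL (Fin n) A⸨X⸩}
    (hp : p ∈ congruenceSubgroup n A) :
    glMap (ofPowerSeries ℤ A) Q * p * (glMap (ofPowerSeries ℤ A) Q)⁻¹ ∈
      congruenceSubgroup n A := by
  obtain ⟨P, hP, rfl⟩ := hp
  rw [← map_mul, ← map_inv, ← map_mul]
  exact Subgroup.mem_map_of_mem _ ((MonoidHom.normal_ker _).conj_mem P hP Q)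

lemma glMap_expandAtInfinity_glMap_C (Q : GL (Fin n) R) :
    glMap (expandAtInfinity R) (glMap Polynomial.C Q) =
      glMap (ofPowerSeries ℤ R) (glMap PowerSeries.C Q) := by
  rw [glMap_glMap, glMap_glMap, expandAtInfinity_comp_C]

lemma exists_transvectionGL_single_neg_one_mul_eq (hn : 3 ≤ n) (hij : i ≠ j) (a : A)
    {p : GL (Fin n) A⸨X⸩} (hp : p ∈ congruenceSubgroup n A) :
    ∃ h ∈ congruenceSubgroup n A, ∃ e ∈ elemGL n (Polynomial A),
      transvectionGL hij (HahnSeries.single (-1) a) * p = h * glMap (expandAtInfinity A) e := by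
  obtain ⟨P, hP, rfl⟩ := hp
  rw [SetLike.mem_coe, MonoidHom.mem_ker] at hP
  set Q := glMap PowerSeries.constantCoeff P
  have hQ : glMap (PowerSeries.map (residue A)) (glMap PowerSeries.C Q) = 1 := by
    have hcomp : ((PowerSeries.map (residue A)).comp PowerSeries.C).comp
        PowerSeries.constantCoeff =
        (PowerSeries.C.comp PowerSeries.constantCoeff).comp (PowerSeries.map (residue A)) :=
      RingHom.ext fun q => by
        simp only [RingHom.comp_apply, PowerSeries.map_C, PowerSeries.coeff_map,
          ← PowerSeries.coeff_zero_eq_constantCoeff_apply]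
    rw [glMap_glMap, glMap_glMap, hcomp, ← glMap_glMap, hP, map_one]
  have hQ0 : glMap PowerSeries.constantCoeff (glMap PowerSeries.C Q) = Q := by
    rw [glMap_glMap, PowerSeries.constantCoeff_comp_C, glMap_id]
  obtain ⟨a', ha'⟩ := exists_transvectionGL_mul_mul_inv_mem_congruenceSubgroup hij a
    (P := P * (glMap PowerSeries.C Q)⁻¹) (by rw [map_mul, map_inv, hP, hQ, one_mul, inv_one])
    (by rw [map_mul, map_inv, hQ0, mul_inv_cancel])
  refine ⟨_, mul_mem ha' (Subgroup.mem_map_of_mem _ (MonoidHom.mem_ker.2 hQ)), _,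
    (elemGL_normal hn).conj_mem _ (transvectionGL_mem_elemGL hij (Polynomial.monomial 1 a'))
      (glMap Polynomial.C Q)⁻¹, ?_⟩
  simp only [map_mul, map_inv, inv_inv, glMap_expandAtInfinity_glMap_C, glMap_transvectionGL,
    expandAtInfinity_monomial, Nat.cast_one]
  group

lemma exists_transvectionGL_expandAtInfinity_mul_eq (hn : 3 ≤ n) (hij : i ≠ j)
    {f : Polynomial A} (hf : f.natDegree ≤ 1) {p : GL (Fin n) A⸨X⸩}
    (hp : p ∈ congruenceSubgroup n A) :
    ∃ h ∈ congruenceSubgroup n A, ∃ e ∈ elemGL n (Polynomial A),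
      transvectionGL hij (expandAtInfinity A f) * p = h * glMap (expandAtInfinity A) e := by
  obtain ⟨a, b, rfl⟩ := Polynomial.exists_eq_X_add_C_of_natDegree_le_one hf
  have hb : transvectionGL hij (expandAtInfinity A (Polynomial.C b)) =
      glMap (ofPowerSeries ℤ A) (transvectionGL hij (PowerSeries.C b)) := by
    rw [glMap_transvectionGL, expandAtInfinity_C, HahnSeries.ofPowerSeries_C]
  obtain ⟨h, hh, e, he, heq⟩ := exists_transvectionGL_single_neg_one_mul_eq hn hij a
    (conj_mem_congruenceSubgroup (A := A) (transvectionGL hij (PowerSeries.C b)) hp)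
  refine ⟨h, hh, e * transvectionGL hij (Polynomial.C b),
    mul_mem he (transvectionGL_mem_elemGL hij _), ?_⟩
  rw [Polynomial.C_mul_X_eq_monomial, map_add, transvectionGL_add, expandAtInfinity_monomial,
    Nat.cast_one, map_mul, ← mul_assoc, ← heq,
    glMap_transvectionGL (expandAtInfinity A), hb]
  group

variable (n A) in
/-- The subgroup of `GL_n(A((y)))` generated by `congruenceSubgroup n A` and `E_n(A[y⁻¹])`. -/
noncomputable def congruenceElementarySubgroup : Subgroup (GL (Fin n) A⸨X⸩) :=
  congruenceSubgroup n A ⊔ (elemGL n (Polynomial A)).map (glMap (expandAtInfinity A))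

theorem exists_eq_mul_glMap_of_mem_congruenceElementarySubgroup (hn : 3 ≤ n)
    {w : GL (Fin n) A⸨X⸩} (hw : w ∈ congruenceElementarySubgroup n A) :
    ∃ h ∈ congruenceSubgroup n A, ∃ e ∈ elemGL n (Polynomial A),
      w = h * glMap (expandAtInfinity A) e := by
  rw [congruenceElementarySubgroup, map_elemGL_polynomial_eq_closure hn] at hw
  obtain ⟨h, hh, x, hx, rfl⟩ := coe_sup_closure_subset
    (by
      rintro _ ⟨i, j, hij, f, hf, rfl⟩
      exact ⟨i, j, hij, -f, by rwa [Polynomial.natDegree_neg], by rw [map_neg, transvectionGL_inv]⟩)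
    (by
      rintro _ ⟨i, j, hij, f, hf, rfl⟩ p hp
      obtain ⟨h, hh, e, he, heq⟩ := exists_transvectionGL_expandAtInfinity_mul_eq hn hij hf hp
      rw [heq, ← map_elemGL_polynomial_eq_closure hn]
      exact Set.mul_mem_mul hh (Subgroup.mem_map_of_mem _ he)) hw
  rw [SetLike.mem_coe, ← map_elemGL_polynomial_eq_closure hn] at hx
  obtain ⟨e, he, rfl⟩ := hx
  exact ⟨h, hh, e, he, rfl⟩

end CongruenceSubgroup

section MonomialDiagonal

open HahnSeries (ofPowerSeries)
open scoped LaurentSeries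

variable {n : ℕ} {R S : Type*} [CommRing R] [CommRing S] {i j : Fin n}

/-- The diagonal matrix `diag(y ^ d₁, …, y ^ dₙ)` over the Laurent series in `y`. -/
noncomputable def monomialDiagonal (d : Fin n → ℤ) : GL (Fin n) R⸨X⸩ where
  val := diagonal fun i => HahnSeries.single (d i) 1
  inv := diagonal fun i => HahnSeries.single (-d i) 1
  val_inv := by simp [HahnSeries.single_mul_single]
  inv_val := by simp [HahnSeries.single_mul_single]

lemma monomialDiagonal_zero : (monomialDiagonal 0 : GL (Fin n) R⸨X⸩) = 1 :=
  Units.ext (by simp [monomialDiagonal])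

lemma monomialDiagonal_add (d e : Fin n → ℤ) :
    (monomialDiagonal (d + e) : GL (Fin n) R⸨X⸩) = monomialDiagonal d * monomialDiagonal e :=
  Units.ext (by simp [monomialDiagonal, HahnSeries.single_mul_single])

lemma monomialDiagonal_neg (d : Fin n → ℤ) :
    (monomialDiagonal (-d) : GL (Fin n) R⸨X⸩) = (monomialDiagonal d)⁻¹ :=
  Units.ext rfl

lemma monomialDiagonal_mul_apply (d : Fin n → ℤ) (g : GL (Fin n) R⸨X⸩) (k l : Fin n) :
    (monomialDiagonal d * g : GL (Fin n) R⸨X⸩) k l = HahnSeries.single (d k) 1 * g k l :=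
  diagonal_mul _ _ k l

lemma mul_monomialDiagonal_apply (g : GL (Fin n) R⸨X⸩) (d : Fin n → ℤ) (k l : Fin n) :
    (g * monomialDiagonal d : GL (Fin n) R⸨X⸩) k l = g k l * HahnSeries.single (d l) 1 :=
  mul_diagonal _ _ k l

lemma monomialDiagonal_const_commute (m : ℤ) (g : GL (Fin n) R⸨X⸩) :
    Commute (monomialDiagonal fun _ => m) g := by
  ext k l : 3
  rw [monomialDiagonal_mul_apply, mul_monomialDiagonal_apply, mul_comm]

lemma glMap_mapLaurentSeries_monomialDiagonal (f : R →+* S) (d : Fin n → ℤ) :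
    glMap (mapLaurentSeries f) (monomialDiagonal d) = monomialDiagonal d := by
  refine Units.ext ?_
  rw [val_glMap, monomialDiagonal, diagonal_map (map_zero _)]
  simp only [mapLaurentSeries_single, map_one, monomialDiagonal]

lemma monomialDiagonal_conj_transvectionGL (d : Fin n → ℤ) (hij : i ≠ j) (a : R⸨X⸩) :
    monomialDiagonal d * transvectionGL hij a * (monomialDiagonal d)⁻¹ =
      transvectionGL hij (HahnSeries.single (d i - d j) 1 * a) := by
  rw [mul_inv_eq_iff_eq_mul]
  ext k l : 3
  rw [monomialDiagonal_mul_apply, mul_monomialDiagonal_apply, val_transvectionGL,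
    val_transvectionGL, transvection, transvection, Matrix.add_apply, Matrix.add_apply, mul_add,
    add_mul]
  refine congrArg₂ (· + ·) ?_ ?_
  · obtain rfl | hkl := eq_or_ne k l
    · rw [mul_comm]
    · rw [Matrix.one_apply_ne hkl, mul_zero, zero_mul]
  · by_cases hkl : i = k ∧ j = l
    · obtain ⟨rfl, rfl⟩ := hkl
      rw [Matrix.single_apply_same, Matrix.single_apply_same, mul_right_comm,
        HahnSeries.single_mul_single, sub_add_cancel, mul_one]
    · rw [Matrix.single_apply_of_ne _ _ _ _ _ hkl, Matrix.single_apply_of_ne _ _ _ _ _ hkl,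
        mul_zero, zero_mul]

lemma monomialDiagonal_inv_conj_transvectionGL (d : Fin n → ℤ) (hij : i ≠ j) (a : R⸨X⸩) :
    (monomialDiagonal d)⁻¹ * transvectionGL hij a * monomialDiagonal d =
      transvectionGL hij (HahnSeries.single (d j - d i) 1 * a) := by
  have h := monomialDiagonal_conj_transvectionGL (-d) hij a
  rwa [monomialDiagonal_neg, inv_inv, Pi.neg_apply, Pi.neg_apply, neg_sub_neg] at h

lemma val_monomialDiagonal_single (i : Fin n) :
    (monomialDiagonal (Pi.single i 1) : GL (Fin n) R⸨X⸩).val =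
      (diagonal (Pi.mulSingle i PowerSeries.X)).map (ofPowerSeries ℤ R) := by
  rw [monomialDiagonal, diagonal_map (map_zero _)]
  refine congrArg diagonal (funext fun k => ?_)
  obtain rfl | hk := eq_or_ne k i
  · simp
  · simp [hk]

lemma exists_diagonal_mul_eq_mul_diagonal {c : GL (Fin n) (PowerSeries R)}
    (hc : ∀ l ≠ j, PowerSeries.constantCoeff (c i l) = 0) :
    ∃ c' : GL (Fin n) (PowerSeries R),
      diagonal (Pi.mulSingle i PowerSeries.X) * c'.val =
        c.val * diagonal (Pi.mulSingle j PowerSeries.X) := by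
  set M : Matrix (Fin n) (Fin n) (PowerSeries R) :=
    c.val * diagonal (Pi.mulSingle j PowerSeries.X) with hM
  have hrow (l : Fin n) : PowerSeries.X ∣ M i l := by
    rw [hM, mul_diagonal]
    obtain rfl | hl := eq_or_ne l j
    · rw [Pi.mulSingle_eq_same]
      exact dvd_mul_left _ _
    · exact (PowerSeries.X_dvd_iff.2 (hc l hl)).mul_right _
  choose q hq using hrow
  have hN : diagonal (Pi.mulSingle i PowerSeries.X) * M.updateRow i q = M := by
    ext1 k l
    rw [diagonal_mul]
    obtain rfl | hk := eq_or_ne k i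
    · rw [Pi.mulSingle_eq_same, updateRow_self, hq]
    · rw [Pi.mulSingle_eq_of_ne hk, updateRow_ne hk, one_mul]
  have hdet : (M.updateRow i q).det = c.val.det := by
    refine PowerSeries.X_mul_cancel ?_
    have h := congrArg det hN
    rwa [hM, det_mul, det_mul, det_diagonal, det_diagonal, Fintype.prod_pi_mulSingle',
      Fintype.prod_pi_mulSingle', mul_comm c.val.det] at h
  obtain ⟨c', hc'⟩ : IsUnit (M.updateRow i q) := by
    rw [isUnit_iff_isUnit_det, hdet]
    exact (isUnit_iff_isUnit_det _).1 c.isUnit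
  exact ⟨c', hc' ▸ hN⟩

lemma exists_glMap_eq_monomialDiagonal_mul {c : GL (Fin n) (PowerSeries R)}
    (hc : ∀ l ≠ j, PowerSeries.constantCoeff (c i l) = 0) :
    ∃ c' : GL (Fin n) (PowerSeries R), monomialDiagonal (Pi.single i 1) *
      glMap (ofPowerSeries ℤ R) c' =
        glMap (ofPowerSeries ℤ R) c * monomialDiagonal (Pi.single j 1) := by
  obtain ⟨c', hc'⟩ := exists_diagonal_mul_eq_mul_diagonal hc
  refine ⟨c', Units.ext ?_⟩
  rw [Units.val_mul, Units.val_mul, val_monomialDiagonal_single, val_monomialDiagonal_single,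
    val_glMap, val_glMap, ← Matrix.map_mul, hc', Matrix.map_mul]

end MonomialDiagonal

section BirkhoffFactorization

open HahnSeries (ofPowerSeries)
open IsLocalRing (residue)
open scoped LaurentSeries

variable {n : ℕ} {R A : Type*} [CommRing R] [CommRing A] [IsLocalRing A] {i j : Fin n}

lemma exists_isUnit_apply (c : GL (Fin n) A) (i : Fin n) : ∃ j, IsUnit (c i j) := by
  have hsum : IsUnit (∑ j, c i j * (c⁻¹ : GL (Fin n) A) j i) := by
    have h : (c * c⁻¹ : GL (Fin n) A) i i = 1 := by
      rw [mul_inv_cancel, Units.val_one, one_apply_eq]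
    rw [← mul_apply, ← Units.val_mul, h]
    exact isUnit_one
  obtain ⟨j, -, hj⟩ := IsLocalRing.exists_of_isUnit_sum hsum
  exact ⟨j, isUnit_of_mul_isUnit_left hj⟩

lemma exists_mem_mul_apply_eq_zero {c : GL (Fin n) R} (hij : IsUnit (c i j))
    {K : Subgroup (GL (Fin n) R)}
    (hK : ∀ (k : Fin n) (hjk : j ≠ k) (a : R), c i k ∣ a → transvectionGL hjk a ∈ K) :
    ∃ F ∈ K, ∀ l ≠ j, (c * F) i l = 0 := by
  obtain ⟨v, hv⟩ := hij.exists_right_inv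
  obtain ⟨f, hfj, hf⟩ : ∃ f : Fin n → R, f j = 0 ∧ ∀ k ≠ j, f k = -(c i k * v) :=
    ⟨fun k => if k = j then 0 else -(c i k * v), if_pos rfl, fun k hk => if_neg hk⟩
  have hF : ContainsTransvection K (Pi.single j 1) f := by
    rw [← Finset.univ_sum_single f]
    refine .sum_right fun k _ => ?_
    obtain rfl | hk := eq_or_ne k j
    · rw [hfj, Pi.single_zero]
      exact .zero_right K _
    · rw [ContainsTransvection.single_iff hk.symm, one_mul, hf k hk]
      exact hK k hk.symm _ (dvd_neg.2 (dvd_mul_right _ _))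
  obtain ⟨-, F, hFK, hF⟩ := hF
  refine ⟨F, hFK, fun l hl => ?_⟩
  rw [Units.val_mul, hF, mul_add, mul_one, mul_vecMulVec, Matrix.add_apply, vecMulVec_apply,
    mulVec_single_one, col_apply, hf l hl]
  linear_combination -c i l * hv

lemma transvectionGL_single_mem_congruenceElementarySubgroup (hij : i ≠ j) {e : ℤ} {a : A}
    (h : 0 < e → ¬IsUnit a) :
    transvectionGL hij (HahnSeries.single e a) ∈ congruenceElementarySubgroup n A := by
  obtain he | he := lt_or_ge 0 e
  · obtain ⟨m, rfl⟩ := Int.eq_ofNat_of_zero_le he.le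
    refine Subgroup.mem_sup_left ⟨transvectionGL hij (PowerSeries.C a * PowerSeries.X ^ m), ?_, ?_⟩
    · have ha : residue A a = 0 := (IsLocalRing.residue_eq_zero_iff a).2 (h he)
      rw [SetLike.mem_coe, MonoidHom.mem_ker, glMap_transvectionGL]
      refine Units.ext ?_
      simp [val_transvectionGL, ha]
    · rw [glMap_transvectionGL, map_mul, map_pow, HahnSeries.ofPowerSeries_C,
        HahnSeries.ofPowerSeries_X, HahnSeries.single_pow, HahnSeries.C_apply,
        HahnSeries.single_mul_single]
      simp
  · obtain ⟨m, rfl⟩ : ∃ m : ℕ, e = -m := ⟨e.natAbs, by lia⟩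
    refine Subgroup.mem_sup_right ⟨transvectionGL hij (Polynomial.monomial m a),
      transvectionGL_mem_elemGL hij _, ?_⟩
    rw [glMap_transvectionGL, expandAtInfinity_monomial]

/- Among the columns with a unit in the `i`-th row, `j` has maximal `d j`; hence the entries
cleared by column operations across a positive exponent are non-units. -/
lemma exists_conj_mem_and_constantCoeff_eq_zero (c : GL (Fin n) (PowerSeries A)) (i : Fin n)
    (d : Fin n → ℤ) :
    ∃ (j : Fin n) (F : GL (Fin n) A),
      (monomialDiagonal d)⁻¹ * glMap (ofPowerSeries ℤ A) (glMap PowerSeries.C F) *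
        monomialDiagonal d ∈ congruenceElementarySubgroup n A ∧
      ∀ l ≠ j, PowerSeries.constantCoeff ((c * glMap PowerSeries.C F) i l) = 0 := by
  classical
  set c₀ := glMap PowerSeries.constantCoeff c
  obtain ⟨j₀, hj₀⟩ := exists_isUnit_apply c₀ i
  obtain ⟨j, hj, hmax⟩ := Finset.exists_max_image (Finset.univ.filter fun j => IsUnit (c₀ i j)) d
    ⟨j₀, by simpa using hj₀⟩
  simp only [Finset.mem_filter, Finset.mem_univ, true_and] at hj hmax
  set K : Subgroup (GL (Fin n) A) := (congruenceElementarySubgroup n A).comap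
    ((MulAut.conj (monomialDiagonal d)⁻¹).toMonoidHom.comp
      ((glMap (ofPowerSeries ℤ A)).comp (glMap PowerSeries.C))) with hK
  have hmem {F : GL (Fin n) A} : F ∈ K ↔
      (monomialDiagonal d)⁻¹ * glMap (ofPowerSeries ℤ A) (glMap PowerSeries.C F) *
        monomialDiagonal d ∈ congruenceElementarySubgroup n A := by
    simp [hK]
  obtain ⟨F, hF, hzero⟩ := exists_mem_mul_apply_eq_zero (K := K) hj fun k hjk a ha => by
    rw [hmem, glMap_transvectionGL, glMap_transvectionGL, HahnSeries.ofPowerSeries_C,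
      monomialDiagonal_inv_conj_transvectionGL, HahnSeries.C_apply, HahnSeries.single_mul_single,
      add_zero, one_mul]
    refine transvectionGL_single_mem_congruenceElementarySubgroup hjk fun hpos hunit => ?_
    exact (hmax k (isUnit_of_dvd_unit ha hunit)).not_gt (sub_pos.1 hpos)
  refine ⟨j, F, hmem.1 hF, fun l hl => ?_⟩
  rw [← glMap_apply, map_mul, glMap_glMap, PowerSeries.constantCoeff_comp_C, glMap_id]
  exact hzero l hl

variable (n A) in
/-- The products `c diag(y ^ d₁, …, y ^ dₙ) w` with `c ∈ GL_n(A[[y]])` and `w` in the subgroup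
`congruenceElementarySubgroup n A`. -/
def birkhoffProducts : Set (GL (Fin n) A⸨X⸩) :=
  {z | ∃ (c : GL (Fin n) (PowerSeries A)) (d : Fin n → ℤ),
    ∃ w ∈ congruenceElementarySubgroup n A,
      z = glMap (ofPowerSeries ℤ A) c * monomialDiagonal d * w}

lemma one_mem_birkhoffProducts : 1 ∈ birkhoffProducts n A :=
  ⟨1, 0, 1, one_mem _, by rw [monomialDiagonal_zero, map_one, mul_one, mul_one]⟩

lemma glMap_ofPowerSeries_mul_mem_birkhoffProducts (c : GL (Fin n) (PowerSeries A))
    {z : GL (Fin n) A⸨X⸩} (hz : z ∈ birkhoffProducts n A) :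
    glMap (ofPowerSeries ℤ A) c * z ∈ birkhoffProducts n A := by
  obtain ⟨c', d, w, hw, rfl⟩ := hz
  exact ⟨c * c', d, w, hw, by simp only [map_mul, mul_assoc]⟩

lemma monomialDiagonal_neg_single_mul_mem_birkhoffProducts (i : Fin n) {z : GL (Fin n) A⸨X⸩}
    (hz : z ∈ birkhoffProducts n A) :
    monomialDiagonal (-Pi.single i 1) * z ∈ birkhoffProducts n A := by
  obtain ⟨c, d, w, hw, rfl⟩ := hz
  obtain ⟨j, F, hF, hc⟩ := exists_conj_mem_and_constantCoeff_eq_zero c i d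
  obtain ⟨c', hc'⟩ := exists_glMap_eq_monomialDiagonal_mul hc
  refine ⟨c', -Pi.single j 1 + d, _, mul_mem (inv_mem hF) hw, ?_⟩
  rw [monomialDiagonal_add, monomialDiagonal_neg, monomialDiagonal_neg, inv_mul_eq_iff_eq_mul]
  simp only [← mul_assoc, hc', map_mul]
  group

lemma monomialDiagonal_mul_mem_birkhoffProducts (d : Fin n → ℤ) {z : GL (Fin n) A⸨X⸩}
    (hz : z ∈ birkhoffProducts n A) : monomialDiagonal d * z ∈ birkhoffProducts n A := by
  let T : AddSubmonoid (Fin n → ℤ) :=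
    { carrier := {d | ∀ z ∈ birkhoffProducts n A, monomialDiagonal d * z ∈ birkhoffProducts n A}
      zero_mem' := fun z hz => by rwa [monomialDiagonal_zero, one_mul]
      add_mem' := fun {a b} ha hb z hz => by
        rw [monomialDiagonal_add, mul_assoc]
        exact ha _ (hb z hz) }
  have hconst (m : ℤ) : (fun _ => m) ∈ T := by
    rintro _ ⟨c, d, w, hw, rfl⟩
    refine ⟨c, (fun _ => m) + d, w, hw, ?_⟩
    rw [monomialDiagonal_add, ← mul_assoc, ← mul_assoc, ← mul_assoc,
      (monomialDiagonal_const_commute m _).eq]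
  have hsingle (i : Fin n) : -Pi.single i 1 ∈ T := fun z hz =>
    monomialDiagonal_neg_single_mul_mem_birkhoffProducts i hz
  obtain ⟨m, hm⟩ := Finite.exists_le d
  have hd : d = (fun _ => m) + ∑ i, (m - d i).toNat • (-Pi.single i 1 : Fin n → ℤ) := by
    ext k
    have := hm k
    simp [Finset.sum_apply, Pi.single_apply, this]
  have hdT : d ∈ T := hd ▸ add_mem (hconst m) (sum_mem fun i _ => nsmul_mem (hsingle i) _)
  exact hdT z hz

theorem mem_birkhoffProducts_of_mem_elemGL {g : GL (Fin n) A⸨X⸩} (hg : g ∈ elemGL n A⸨X⸩) :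
    g ∈ birkhoffProducts n A := by
  refine elemGL_induction_left hg one_mem_birkhoffProducts fun i j hij b x hx => ?_
  have hb : transvectionGL hij b = monomialDiagonal (Pi.single i b.order) *
      glMap (ofPowerSeries ℤ A) (transvectionGL hij b.powerSeriesPart) *
        monomialDiagonal (-Pi.single i b.order) := by
    rw [monomialDiagonal_neg, glMap_transvectionGL, monomialDiagonal_conj_transvectionGL,
      Pi.single_eq_same, Pi.single_eq_of_ne hij.symm, sub_zero,
      LaurentSeries.single_order_mul_powerSeriesPart]
  rw [hb, mul_assoc, mul_assoc]
  exact monomialDiagonal_mul_mem_birkhoffProducts _ <|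
    glMap_ofPowerSeries_mul_mem_birkhoffProducts _ <|
      monomialDiagonal_mul_mem_birkhoffProducts _ hx

end BirkhoffFactorization

section LocalRing

open HahnSeries (ofPowerSeries)
open IsLocalRing (residue)
open scoped LaurentSeries

variable {n : ℕ} {R A : Type*} [CommRing R] [CommRing A] [IsLocalRing A]

lemma exponent_nonpos_of_glMap_expandAtInfinity_eq [Nontrivial R] {G : GL (Fin n) (Polynomial R)}
    {c : GL (Fin n) (PowerSeries R)} {d : Fin n → ℤ}
    (h : glMap (expandAtInfinity R) G = glMap (ofPowerSeries ℤ R) c * monomialDiagonal d)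
    (i : Fin n) : d i ≤ 0 := by
  by_contra! hi
  have hcol (k : Fin n) : G k i = 0 := by
    refine eq_zero_of_expandAtInfinity_eq_ofPowerSeries_mul_single (p := c k i) hi ?_
    rw [← glMap_apply, h, mul_monomialDiagonal_apply, glMap_apply]
  have hdet := (isUnit_iff_isUnit_det _).1 G.isUnit
  rw [det_eq_zero_of_column_eq_zero i hcol] at hdet
  exact not_isUnit_zero hdet

lemma exponent_nonneg_of_glMap_expandAtInfinity_eq [Nontrivial R] {G : GL (Fin n) (Polynomial R)}
    {c : GL (Fin n) (PowerSeries R)} {d : Fin n → ℤ}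
    (h : glMap (expandAtInfinity R) G = glMap (ofPowerSeries ℤ R) c * monomialDiagonal d)
    (i : Fin n) : 0 ≤ d i := by
  by_contra! hi
  have hinv : glMap (expandAtInfinity R) G⁻¹ =
      monomialDiagonal (-d) * glMap (ofPowerSeries ℤ R) c⁻¹ := by
    rw [map_inv, h, _root_.mul_inv_rev, monomialDiagonal_neg, map_inv]
  have hrow (k : Fin n) : G⁻¹ i k = 0 := by
    refine eq_zero_of_expandAtInfinity_eq_ofPowerSeries_mul_single (p := c⁻¹ i k)
      (neg_pos.2 hi) ?_
    rw [← glMap_apply, hinv, monomialDiagonal_mul_apply, glMap_apply, mul_comm, Pi.neg_apply]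
  have hdet := (isUnit_iff_isUnit_det _).1 G⁻¹.isUnit
  rw [det_eq_zero_of_row_eq_zero i hrow] at hdet
  exact not_isUnit_zero hdet

lemma normalizeAtZero_eq_one_of_glMap_expandAtInfinity_eq {G : GL (Fin n) (Polynomial R)}
    {c : GL (Fin n) (PowerSeries R)}
    (h : glMap (expandAtInfinity R) G = glMap (ofPowerSeries ℤ R) c) : normalizeAtZero G = 1 := by
  rw [normalizeAtZero, mul_inv_eq_one]
  refine Units.ext (Matrix.ext fun k l => ?_)
  have hkl : expandAtInfinity R (G k l) = ofPowerSeries ℤ R (c k l) := by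
    rw [← glMap_apply, h, glMap_apply]
  rw [glMap_apply, glMap_apply, Polynomial.coe_evalRingHom, ← Polynomial.coeff_zero_eq_eval_zero]
  exact eq_C_of_expandAtInfinity_eq_ofPowerSeries hkl

lemma normalizeAtZero_eq_one_of_glMap_expandAtInfinity_eq_mul {G : GL (Fin n) (Polynomial A)}
    {c : GL (Fin n) (PowerSeries A)} {d : Fin n → ℤ} {p : GL (Fin n) A⸨X⸩}
    (hp : p ∈ congruenceSubgroup n A)
    (h : glMap (expandAtInfinity A) G =
      glMap (ofPowerSeries ℤ A) c * monomialDiagonal d * p) : normalizeAtZero G = 1 := by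
  obtain ⟨P, hP, rfl⟩ := hp
  have hres : glMap (expandAtInfinity _) (glMap (Polynomial.mapRingHom (residue A)) G) =
      glMap (ofPowerSeries ℤ _) (glMap (PowerSeries.map (residue A)) c) * monomialDiagonal d := by
    have h' := congrArg (glMap (mapLaurentSeries (residue A))) h
    rw [map_mul, map_mul, glMap_glMap, glMap_glMap, glMap_glMap,
      glMap_mapLaurentSeries_monomialDiagonal, mapLaurentSeries_comp_ofPowerSeries,
      mapLaurentSeries_comp_expandAtInfinity, ← glMap_glMap, ← glMap_glMap, ← glMap_glMap,
      MonoidHom.mem_ker.1 hP, map_one, mul_one] at h'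
    exact h'
  have hd : d = 0 := funext fun i => le_antisymm
    (exponent_nonpos_of_glMap_expandAtInfinity_eq hres i)
    (exponent_nonneg_of_glMap_expandAtInfinity_eq hres i)
  refine normalizeAtZero_eq_one_of_glMap_expandAtInfinity_eq (c := c * P) ?_
  rw [h, hd, monomialDiagonal_zero, mul_one, map_mul]

theorem normalizeAtZero_mem_elemGL_of_glMap_expandAtInfinity_mem (hn : 3 ≤ n)
    {g : GL (Fin n) (Polynomial A)} (hg : glMap (expandAtInfinity A) g ∈ elemGL n A⸨X⸩) :
    normalizeAtZero g ∈ elemGL n (Polynomial A) := by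
  obtain ⟨c, d, w, hw, hcdw⟩ := mem_birkhoffProducts_of_mem_elemGL hg
  obtain ⟨p, hp, e, he, rfl⟩ := exists_eq_mul_glMap_of_mem_congruenceElementarySubgroup hn hw
  have hone : normalizeAtZero (g * e⁻¹) = 1 := by
    refine normalizeAtZero_eq_one_of_glMap_expandAtInfinity_eq_mul hp (c := c) (d := d) ?_
    rw [map_mul, map_inv, hcdw, ← mul_assoc, mul_inv_cancel_right]
  rw [← inv_mul_cancel_right g e, normalizeAtZero_mul, hone, one_mul]
  exact (elemGL_normal hn).conj_mem _ (normalizeAtZero_mem_elemGL he) _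

end LocalRing

end MonicLocalization

open MonicLocalization in
theorem monic_localization_with_evaluation_general (n : ℕ) (hn : 3 ≤ n) (A : Type*) [CommRing A]
    (h : Polynomial A) (hmonic : h.Monic) (g : GL (Fin n) (Polynomial A))
    (hloc : glMap (algebraMap (Polynomial A) (Localization.Away h)) g ∈
      elemGL n (Localization.Away h)) :
    normalizeAtZero g ∈ elemGL n (Polynomial A) := by
  refine normalizeAtZero_mem_elemGL_of_localization_maximal hn g fun m _ => ?_
  refine normalizeAtZero_mem_elemGL_of_glMap_expandAtInfinity_mem hn ?_
  set f := algebraMap A (Localization.AtPrime m)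
  have hunit : IsUnit ((expandAtInfinity _).comp (Polynomial.mapRingHom f) h) :=
    isUnit_expandAtInfinity_of_monic (hmonic.map f)
  have hlift := glMap_mem_elemGL
    (IsLocalization.Away.lift (S := Localization.Away h) h hunit) hloc
  rwa [glMap_glMap, IsLocalization.Away.lift_comp, ← glMap_glMap] at hlift

/-- If `h ∈ A[x]` is monic with `h(1) ∈ A^×`, and `g ∈ GL_n(A[x])` becomes elementary over
`A[x]_h` and satisfies `g(0) = 1`, then `g ∈ E_n(A[x])`, and in particular
`g(1) ∈ E_n(A)`. -/
theorem monic_localization_with_evaluation (n : ℕ) (hn : 3 ≤ n) (A : Type*) [CommRing A]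
    (h : Polynomial A) (hmonic : h.Monic) (hunit : IsUnit (h.eval 1))
    (g : GL (Fin n) (Polynomial A))
    (hloc : glMap (algebraMap (Polynomial A) (Localization.Away h)) g ∈
      elemGL n (Localization.Away h))
    (h0 : glMap (Polynomial.evalRingHom (0 : A)) g = 1) :
    g ∈ elemGL n (Polynomial A) ∧ glMap (Polynomial.evalRingHom (1 : A)) g ∈ elemGL n A := by
  have hg := monic_localization_with_evaluation_general n hn A h hmonic g hloc
  rw [MonicLocalization.normalizeAtZero_of_eval_zero_eq_one h0] at hg
  exact ⟨hg, MonicLocalization.glMap_mem_elemGL _ hg⟩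
end

section
/- Let K be a field and n ≥ 3. Then SL_n(K[x_1^{±1},…,x_m^{±1}]) = E_n(K[x_1^{±1},…,x_m^{±1}]) for every m ≥ 1; that is, every Laurent polynomial matrix of determinant 1 over a field is a product of elementary matrices. -/
/-!
Call `f : R` a *pivot* if every unimodular column of length at least three with an entry equal to
`f` is elementarily equivalent to a basis vector, and every matrix of `SL₂(R)` with corner `f` is
stably elementary. When every nonzero element of `R` is a pivot, clearing first columns reduces a
matrix of `SL_n(R)`, `n ≥ 3`, to one of `SL₂(R)` and then to the identity.

Over a local ring `A`, monic polynomials are pivots of `A[X]`: this is Horrocks' theorem for columns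
and Murthy's theorem for matrices. If moreover `p(0)` is a unit, reduction by means of the entry `p`
compares an object over `A[X]` with its value at `X = 0`, so that Quillen's local-global principle
extends the result from local rings to domains. Such a `p` is also coprime to `X`, which allows
columns and matrices over `A[X, X⁻¹]` with the entry `p` to be moved into `A[X]`; hence `p` is a
pivot of `A[X, X⁻¹]` as well.

Given a nonzero Laurent polynomial `f` over `K`, choose an integer `x` for which the weights
`∑ i, k i * x ^ i` separate the exponents `k` of `f`. Making this weight the first coordinate of the
exponent lattice turns `f` into a Laurent polynomial in one variable whose nonzero coefficients are
monomials in the other variables. These are units, so `f` becomes a unit times a monic polynomial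
with unit constant coefficient.
-/

/-- The elementary subgroup `E_n(R) ⊆ SL_n(R)`. -/
def elemSL (n : ℕ) (R : Type*) [CommRing R] :
    Subgroup (Matrix.SpecialLinearGroup (Fin n) R) :=
  Subgroup.closure {g | ∃ (i j : Fin n) (a : R), i ≠ j ∧
    (g : Matrix (Fin n) (Fin n) R) = Matrix.transvection i j a}

/-- The Laurent polynomial ring `K[x₁^{±1},…,x_m^{±1}]`, as the group algebra of `ℤ^m`. -/
abbrev LaurentRing (A : Type*) [CommRing A] (m : ℕ) : Type _ :=
  AddMonoidAlgebra A (Fin m →₀ ℤ)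

section ElementaryMonoid

open Matrix

lemma transvection_map {ι R S : Type*} [DecidableEq ι] [CommRing R] [CommRing S] (f : R →+* S)
    (i j : ι) (c : R) : (transvection i j c).map f = transvection i j (f c) := by
  simp [transvection, Matrix.map_add]

lemma transvection_eq_one_add_smul_vecMulVec {ι R : Type*} [DecidableEq ι] [CommRing R]
    (i j : ι) (c : R) :
    transvection i j c = 1 + c • vecMulVec (Pi.single i 1) (Pi.single j 1) := by
  rw [transvection, ← single_eq_single_vecMulVec_single, smul_single, smul_eq_mul, mul_one]

lemma map_one_add_smul_vecMulVec {ι R S : Type*} [DecidableEq ι] [CommRing R] [CommRing S]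
    (f : R →+* S) (c : R) (x y : ι → R) :
    (1 + c • vecMulVec x y).map f = 1 + f c • vecMulVec (f ∘ x) (f ∘ y) := by
  ext i j
  simp [vecMulVec_apply, one_apply, apply_ite f]

lemma exists_ne_ne_of_two_lt_card {ι : Type*} [Fintype ι] (hι : 2 < Fintype.card ι) (i j : ι) :
    ∃ l, l ≠ i ∧ l ≠ j :=
  ENat.exists_ne_ne_of_three_le (by rw [ENat.card_eq_coe_fintype_card]; exact_mod_cast hι) i j

variable {ι R S : Type*} [Fintype ι] [DecidableEq ι] [CommRing R] [CommRing S]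

/-- The elementary group `E_ι(R)`, generated by the transvections. It is encoded as a submonoid of
the ring of square matrices, in which products with arbitrary matrices and columns can be formed;
closure under inverses is `elementaryMonoid.inv_mem`. -/
def elementaryMonoid (ι R : Type*) [Fintype ι] [DecidableEq ι] [CommRing R] :
    Submonoid (Matrix ι ι R) :=
  Submonoid.closure {M | ∃ (i j : ι) (c : R), i ≠ j ∧ M = transvection i j c}

namespace elementaryMonoid

lemma transvection_mem {i j : ι} (hij : i ≠ j) (c : R) :
    transvection i j c ∈ elementaryMonoid ι R :=
  Submonoid.subset_closure ⟨i, j, c, hij, rfl⟩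

lemma apply_mem_of_transvection {N : Type*} [MulOneClass N] (f : Matrix ι ι R →* N)
    {P : Submonoid N} (hf : ∀ i j, i ≠ j → ∀ c, f (transvection i j c) ∈ P) {M : Matrix ι ι R}
    (hM : M ∈ elementaryMonoid ι R) : f M ∈ P := by
  suffices elementaryMonoid ι R ≤ P.comap f from this hM
  refine Submonoid.closure_le.mpr ?_
  rintro _ ⟨i, j, c, hij, rfl⟩
  exact hf i j hij c

lemma det_eq_one {M : Matrix ι ι R} (hM : M ∈ elementaryMonoid ι R) : M.det = 1 :=
  Submonoid.mem_bot.mp <| apply_mem_of_transvection detMonoidHom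
    (fun i j hij c => by simp [det_transvection_of_ne i j hij]) hM

lemma inv_mul_self {M : Matrix ι ι R} (hM : M ∈ elementaryMonoid ι R) : M⁻¹ * M = 1 :=
  nonsing_inv_mul M (by simp [det_eq_one hM])

lemma mul_inv_self {M : Matrix ι ι R} (hM : M ∈ elementaryMonoid ι R) : M * M⁻¹ = 1 :=
  mul_nonsing_inv M (by simp [det_eq_one hM])

lemma inv_mem {M : Matrix ι ι R} (hM : M ∈ elementaryMonoid ι R) :
    M⁻¹ ∈ elementaryMonoid ι R := by
  induction hM using Submonoid.closure_induction with
  | mem M hM =>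
    obtain ⟨i, j, c, hij, rfl⟩ := hM
    have h : (transvection i j c)⁻¹ = transvection i j (-c) :=
      inv_eq_left_inv (by simp [transvection_mul_transvection_same _ _ hij])
    exact h ▸ transvection_mem hij _
  | one => simp
  | mul M N _ _ hM hN => exact mul_inv_rev M N ▸ mul_mem hN hM

lemma mul_mem_cancel_left {M N : Matrix ι ι R} (hM : M ∈ elementaryMonoid ι R) :
    M * N ∈ elementaryMonoid ι R ↔ N ∈ elementaryMonoid ι R where
  mp h := by simpa [← mul_assoc, inv_mul_self hM] using mul_mem (inv_mem hM) h
  mpr := mul_mem hM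

lemma mul_mem_cancel_right {M N : Matrix ι ι R} (hM : M ∈ elementaryMonoid ι R) :
    N * M ∈ elementaryMonoid ι R ↔ N ∈ elementaryMonoid ι R where
  mp h := by simpa [mul_assoc, mul_inv_self hM] using mul_mem h (inv_mem hM)
  mpr h := mul_mem h hM

lemma map_mem (f : R →+* S) {M : Matrix ι ι R} (hM : M ∈ elementaryMonoid ι R) :
    M.map f ∈ elementaryMonoid ι S := by
  refine apply_mem_of_transvection (f.mapMatrix : Matrix ι ι R →+* Matrix ι ι S).toMonoidHom
    (fun i j hij c => ?_) hM
  change (transvection i j c).map f ∈ _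
  exact transvection_map f i j c ▸ transvection_mem hij (f c)

lemma transpose_mem {M : Matrix ι ι R} (hM : M ∈ elementaryMonoid ι R) :
    Mᵀ ∈ elementaryMonoid ι R := by
  induction hM using Submonoid.closure_induction with
  | mem M hM =>
    obtain ⟨i, j, c, hij, rfl⟩ := hM
    simpa [transvection] using transvection_mem hij.symm c
  | one => simp
  | mul M N _ _ hM hN => exact transpose_mul M N ▸ mul_mem hN hM

end elementaryMonoid

lemma one_add_vecMulVec_mul (x r y t : ι → R) :
    (1 + vecMulVec x r) * (1 + vecMulVec y t) =
      1 + vecMulVec x r + vecMulVec y t + (r ⬝ᵥ y) • vecMulVec x t := by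
  rw [add_mul, mul_add, mul_add, vecMulVec_mul_vecMulVec, vecMulVec_smul, one_mul, one_mul, mul_one]
  abel

lemma one_add_vecMulVec_sum_mem {α : Type*} (P : Submonoid (Matrix ι ι R)) (x : ι → R)
    (r : α → ι → R) (s : Finset α) (hrx : ∀ p ∈ s, r p ⬝ᵥ x = 0)
    (hr : ∀ p ∈ s, 1 + vecMulVec x (r p) ∈ P) : 1 + vecMulVec x (∑ p ∈ s, r p) ∈ P := by
  classical
  induction s using Finset.induction_on with
  | empty => simp
  | insert p s hp ih =>
    rw [Finset.forall_mem_insert] at hrx hr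
    have h := mul_mem hr.1 (ih hrx.2 hr.2)
    rwa [one_add_vecMulVec_mul, hrx.1, zero_smul, add_zero, add_assoc, ← vecMulVec_add,
      ← Finset.sum_insert hp] at h

namespace elementaryMonoid

lemma one_add_vecMulVec_single_left_mem (l : ι) {r : ι → R} (hr : r l = 0) :
    1 + vecMulVec (Pi.single l 1) r ∈ elementaryMonoid ι R := by
  rw [← Finset.univ_sum_single r]
  refine one_add_vecMulVec_sum_mem _ _ _ _ (fun k _ => ?_) (fun k _ => ?_) <;>
    obtain rfl | hk := eq_or_ne k l
  · simp [hr]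
  · simp [hk.symm]
  · simp [hr]
  · convert transvection_mem hk.symm (r k) using 1
    rw [transvection_eq_one_add_smul_vecMulVec, ← vecMulVec_smul, ← Pi.single_smul, smul_eq_mul,
      mul_one]

lemma one_add_vecMulVec_single_right_mem (l : ι) {x : ι → R} (hx : x l = 0) :
    1 + vecMulVec x (Pi.single l 1) ∈ elementaryMonoid ι R := by
  simpa [transpose_vecMulVec] using transpose_mem (one_add_vecMulVec_single_left_mem l hx)

/-- `1 + x rᵀ` is the commutator of `1 + x eₗᵀ` and `1 + eₗ rᵀ`. -/
lemma one_add_vecMulVec_mem_of_apply_eq_zero {l : ι} {x r : ι → R} (hx : x l = 0) (hr : r l = 0)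
    (h : r ⬝ᵥ x = 0) : 1 + vecMulVec x r ∈ elementaryMonoid ι R := by
  have hcol {y : ι → R} (hy : y l = 0) := one_add_vecMulVec_single_right_mem l hy
  have hrow {t : ι → R} (ht : t l = 0) := one_add_vecMulVec_single_left_mem l ht
  convert mul_mem (mul_mem (hcol hx) (hrow hr))
    (mul_mem (hcol (y := -x) (by simp [hx])) (hrow (t := -r) (by simp [hr]))) using 1
  simp only [mul_add, mul_one, add_mul, one_mul, vecMulVec_mul_vecMulVec, dotProduct_single,
    single_dotProduct, Pi.single_eq_same, one_smul, zero_smul, neg_vecMulVec, vecMulVec_neg,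
    vecMulVec_zero, mul_neg, neg_mul, neg_add_rev, neg_neg, mul_zero, add_zero, hx, hr, h]
  abel

lemma one_add_vecMulVec_mem {l : ι} {x r : ι → R} (hr : r l = 0) (h : r ⬝ᵥ x = 0) :
    1 + vecMulVec x r ∈ elementaryMonoid ι R := by
  have hy : r ⬝ᵥ (x - Pi.single l (x l)) = 0 := by simp [dotProduct_sub, h, hr]
  convert mul_mem (one_add_vecMulVec_single_left_mem l (r := x l • r) (by simp [hr]))
    (one_add_vecMulVec_mem_of_apply_eq_zero (l := l) (by simp) hr hy) using 1
  have hl : vecMulVec (Pi.single l (x l)) r = vecMulVec (Pi.single l 1) (x l • r) := by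
    rw [vecMulVec_smul, ← smul_vecMulVec, ← Pi.single_smul, smul_eq_mul, mul_one]
  rw [one_add_vecMulVec_mul, smul_dotProduct, hy, sub_vecMulVec, hl]
  simp

/-- **Suslin's lemma**. Since `w ⬝ v = 0`, the row `(u ⬝ v) w` is the sum over all `p, q` of the
Koszul relations `w_p u_q (v_q e_p - v_p e_q)`, each of which is orthogonal to `v` and vanishes at
some index. -/
lemma one_add_smul_vecMulVec_mem (hι : 2 < Fintype.card ι) (u : ι → R) {v w : ι → R}
    (hwv : w ⬝ᵥ v = 0) : 1 + (u ⬝ᵥ v) • vecMulVec v w ∈ elementaryMonoid ι R := by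
  let r (p : ι × ι) : ι → R := (w p.1 * u p.2) • (Pi.single p.1 (v p.2) - Pi.single p.2 (v p.1))
  have hsum : (u ⬝ᵥ v) • w = ∑ p, r p := by
    ext a
    have hwv' : ∑ x, w x * v x = 0 := hwv
    have hr (x y : ι) : r (x, y) a =
        (if a = x then w x * (u y * v y) else 0) - if a = y then w x * v x * u y else 0 := by
      simp only [r, Pi.smul_apply, Pi.sub_apply, Pi.single_apply, smul_eq_mul]
      split_ifs <;> ring
    simp only [Finset.sum_apply, Fintype.sum_prod_type, hr, Finset.sum_sub_distrib,
      Finset.sum_ite_eq, Finset.mem_univ, if_true, ← Finset.sum_mul, hwv']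
    simp [dotProduct, ← Finset.mul_sum, mul_comm]
  rw [← vecMulVec_smul, hsum]
  have hrv (p : ι × ι) : r p ⬝ᵥ v = 0 := by simp [r, sub_dotProduct, mul_comm]
  refine one_add_vecMulVec_sum_mem _ _ _ _ (fun p _ => hrv p) fun p _ => ?_
  obtain ⟨l, hl₁, hl₂⟩ := exists_ne_ne_of_two_lt_card hι p.1 p.2
  exact one_add_vecMulVec_mem (l := l) (by simp [r, hl₁, hl₂]) (hrv p)

end elementaryMonoid

end ElementaryMonoid

section Dilation

open Matrix Polynomial

variable {ι R R' : Type*} [CommRing R] [CommRing R'] [Algebra R R'] (S : Submonoid R)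
  [IsLocalization S R']

lemma exists_algebraMap_comp_eq_smul [Finite ι] (v : ι → R') :
    ∃ s ∈ S, ∃ w : ι → R, algebraMap R R' ∘ w = algebraMap R R' s • v := by
  obtain ⟨⟨s, hs⟩, h⟩ := IsLocalization.exist_integer_multiples_of_finite S v
  choose w hw using h
  exact ⟨s, hs, w, funext fun i => by simp [hw, Algebra.smul_def]⟩

variable [Fintype ι] [DecidableEq ι]

/-- The matrices `θ` over `R'[X]`, where `R' = S⁻¹R`, such that `θ(srX)` lifts to an elementary
matrix over `R[X]` for some `s ∈ S` and every `r ∈ S`; the freedom in `r` makes them a monoid. -/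
def dilatableMonoid : Submonoid (Matrix ι ι R'[X]) where
  carrier := {θ | ∃ s ∈ S, ∀ r ∈ S, ∃ Θ ∈ elementaryMonoid ι R[X],
    Θ.map (mapRingHom (algebraMap R R')) =
      θ.map (compRingHom (C (algebraMap R R' (s * r)) * X))}
  one_mem' := ⟨1, one_mem S, fun r _ => ⟨1, one_mem _, by
    rw [Matrix.map_one _ (map_zero _) (map_one _), Matrix.map_one _ (map_zero _) (map_one _)]⟩⟩
  mul_mem' := by
    rintro θ ϑ ⟨s, hs, hθ⟩ ⟨t, ht, hϑ⟩
    refine ⟨s * t, mul_mem hs ht, fun r hr => ?_⟩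
    obtain ⟨Θ, hΘ, hΘθ⟩ := hθ (t * r) (mul_mem ht hr)
    obtain ⟨Φ, hΦ, hΦϑ⟩ := hϑ (s * r) (mul_mem hs hr)
    refine ⟨Θ * Φ, mul_mem hΘ hΦ, ?_⟩
    rw [Matrix.map_mul, Matrix.map_mul, hΘθ, hΦϑ, mul_left_comm t s r, mul_assoc s t r,
      mul_left_comm s t r]

variable {S}

lemma one_add_X_mul_smul_vecMulVec_mem_dilatableMonoid (hS : S ≤ nonZeroDivisors R)
    (hι : 2 < Fintype.card ι) {u v w : ι → R'} (huv : u ⬝ᵥ v = 1) (hwv : w ⬝ᵥ v = 0) (p : R'[X]) :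
    1 + (X * p) • vecMulVec (C ∘ v) (C ∘ w) ∈ dilatableMonoid S := by
  obtain ⟨s, hs, v', hv⟩ := exists_algebraMap_comp_eq_smul S v
  obtain ⟨t, ht, w', hw⟩ := exists_algebraMap_comp_eq_smul S w
  obtain ⟨d, hd, u', hu⟩ := exists_algebraMap_comp_eq_smul S u
  obtain ⟨e, he, hq⟩ := IsLocalization.integerNormalization_spec S p
  set q := IsLocalization.integerNormalization S p
  have hwv' : w' ⬝ᵥ v' = 0 := IsLocalization.injective R' hS <| by
    simp [RingHom.map_dotProduct, hv, hw, hwv]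
  have huv' : algebraMap R R' (u' ⬝ᵥ v') = algebraMap R R' (d * s) := by
    rw [RingHom.map_dotProduct, hv, hu, smul_dotProduct, dotProduct_smul, huv]
    simp
  refine ⟨e * (d * s) * (s * t), mul_mem (mul_mem he (mul_mem hd hs)) (mul_mem hs ht),
    fun r _ => ?_⟩
  set f := C (e * (d * s) * (s * t) * r) * X
  have hqf : (q.comp f).map (algebraMap R R') = C (algebraMap R R' e) *
      p.comp (C (algebraMap R R' (e * (d * s) * (s * t) * r)) * X) := by
    simp [Polynomial.map_comp, hq, f, Algebra.smul_def]
  have hvC : mapRingHom (algebraMap R R') ∘ C ∘ v' = C (algebraMap R R' s) • C ∘ v :=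
    funext fun a => by simpa using congr_arg C (congr_fun hv a)
  have hwC : mapRingHom (algebraMap R R') ∘ C ∘ w' = C (algebraMap R R' t) • C ∘ w :=
    funext fun a => by simpa using congr_arg C (congr_fun hw a)
  have hC (g : R'[X]) (x : ι → R') : compRingHom g ∘ C ∘ x = C ∘ x := funext fun a => by simp
  have hwvC : ((C r * X * q.comp f) • C ∘ w') ⬝ᵥ (C ∘ v') = 0 := by
    rw [smul_dotProduct, ← RingHom.map_dotProduct, hwv', map_zero, smul_zero]
  refine ⟨_, elementaryMonoid.one_add_smul_vecMulVec_mem hι (C ∘ u') hwvC, ?_⟩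
  rw [vecMulVec_smul, smul_smul, map_one_add_smul_vecMulVec, map_one_add_smul_vecMulVec,
    ← RingHom.map_dotProduct, hvC, hwC, hC, hC, vecMulVec_smul, smul_vecMulVec, smul_smul,
    smul_smul]
  congr 2
  simp only [coe_mapRingHom, coe_compRingHom, map_C, map_X, map_mul, X_comp, hqf, huv']
  ring

lemma map_C_mul_transvection_mul_map_C {ρ σ : Matrix ι ι R} (h : ρ * σ = 1) (i j : ι)
    (p : R[X]) : ρ.map C * transvection i j p * σ.map C =
      1 + p • vecMulVec (C ∘ ρ.col i) (C ∘ σ.row j) := by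
  rw [transvection_eq_one_add_smul_vecMulVec, mul_add, add_mul, mul_one, ← Matrix.map_mul, h,
    Matrix.map_one _ (map_zero _) (map_one _), mul_smul_comm, smul_mul_assoc, mul_vecMulVec,
    vecMulVec_mul, mulVec_single_one, single_one_vecMul]
  rfl

lemma map_C_mul_transvection_mul_map_C_mem_dilatableMonoid (hS : S ≤ nonZeroDivisors R)
    (hι : 2 < Fintype.card ι) {ρ σ : Matrix ι ι R'} (h : ρ * σ = 1) {i j : ι} (hij : i ≠ j)
    (p : R'[X]) : ρ.map C * transvection i j (X * p) * σ.map C ∈ dilatableMonoid S := by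
  have hσρ (k : ι) : σ.row k ⬝ᵥ ρ.col i = (1 : Matrix ι ι R') k i :=
    mul_eq_one_comm.mp h ▸ rfl
  rw [map_C_mul_transvection_mul_map_C h]
  exact one_add_X_mul_smul_vecMulVec_mem_dilatableMonoid hS hι
    ((hσρ i).trans (one_apply_eq i)) ((hσρ j).trans (one_apply_ne hij.symm)) p

/-- The conjugating factors make the induction on `θ` work: `θ₁ θ₂` splits as
`(ρ θ₁ θ₂(0) σ) · ((ρ θ₁(0)) θ₂ σ)`, where each factor evaluates to `1` at `0`. -/
lemma map_C_mul_mul_map_C_mem_dilatableMonoid (hS : S ≤ nonZeroDivisors R) (hι : 2 < Fintype.card ι)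
    {θ : Matrix ι ι R'[X]} (hθ : θ ∈ elementaryMonoid ι R'[X]) :
    ∀ {ρ σ : Matrix ι ι R'}, ρ * θ.map (evalRingHom 0) * σ = 1 →
      ρ.map C * θ * σ.map C ∈ dilatableMonoid S := by
  induction hθ using Submonoid.closure_induction with
  | mem θ hθ =>
    obtain ⟨i, j, a, hij, rfl⟩ := hθ
    intro ρ σ h
    rw [transvection_map, coe_evalRingHom, ← coeff_zero_eq_eval_zero, mul_assoc] at h
    have hd := map_C_mul_transvection_mul_map_C_mem_dilatableMonoid hS hι h hij a.divX
    rwa [Matrix.map_mul, transvection_map, ← mul_assoc, mul_assoc (ρ.map C),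
      transvection_mul_transvection_same _ _ hij, X_mul_divX_add] at hd
  | one =>
    intro ρ σ h
    rw [Matrix.map_one _ (map_zero _) (map_one _), mul_one] at h
    rw [mul_one, ← Matrix.map_mul, h, Matrix.map_one _ (map_zero _) (map_one _)]
    exact one_mem _
  | mul θ ϑ _ _ hθ hϑ =>
    intro ρ σ h
    have h₁ : ρ * θ.map (evalRingHom 0) * (ϑ.map (evalRingHom 0) * σ) = 1 := by
      simpa only [Matrix.map_mul, mul_assoc] using h
    have h₂ : ρ * θ.map (evalRingHom 0) * ϑ.map (evalRingHom 0) * σ = 1 := by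
      rwa [mul_assoc]
    have hC : (ϑ.map (evalRingHom 0) * σ).map C * (ρ * θ.map (evalRingHom 0)).map C = 1 := by
      rw [← Matrix.map_mul, mul_eq_one_comm.mp h₁, Matrix.map_one _ (map_zero _) (map_one _)]
    convert mul_mem (hθ h₁) (hϑ h₂) using 1
    calc ρ.map C * (θ * ϑ) * σ.map C
        = ρ.map C * θ * 1 * ϑ * σ.map C := by simp only [mul_assoc, one_mul]
      _ = _ := by rw [← hC]; simp only [mul_assoc]

theorem elementaryMonoid.exists_map_eq_map_compRingHom_C_mul_X (hS : S ≤ nonZeroDivisors R)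
    (hι : 2 < Fintype.card ι) {θ : Matrix ι ι R'[X]} (hθ : θ ∈ elementaryMonoid ι R'[X])
    (h0 : θ.map (evalRingHom 0) = 1) :
    ∃ s ∈ S, ∃ Θ ∈ elementaryMonoid ι R[X], Θ.map (mapRingHom (algebraMap R R')) =
      θ.map (compRingHom (C (algebraMap R R' s) * X)) := by
  have hθS : θ ∈ dilatableMonoid S := by
    simpa [Matrix.map_one] using map_C_mul_mul_map_C_mem_dilatableMonoid hS hι hθ
      (ρ := 1) (σ := 1) (by simpa using h0)
  obtain ⟨s, hs, h⟩ := hθS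
  exact ⟨s, hs, by simpa using h 1 (one_mem S)⟩

end Dilation

section LocalGlobal

open Matrix Polynomial

universe u v

variable {A : Type u} [CommRing A]

/-- The generic substitution `X ↦ X + s Y`, which tests whether `s` lies in a Quillen ideal; `Y` is
the outer variable of `A[X][Y]`. -/
noncomputable def polynomialShift (s : A) : A[X] →+* A[X][X] :=
  eval₂RingHom (C.comp C) (C X + C (C s) * X)

variable {ι κ : Type*} [Fintype ι] [DecidableEq ι]

/-- The Quillen ideal of `M`: the `s ∈ A` for which `M(X)` and `M(X + sY)` lie in the same
`E_ι(A[X, Y])`-orbit. The condition is imposed after every substitution of elements of an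
`A`-algebra for `X` and `Y`, which makes closure under addition immediate;
`mem_quillenIdeal_of_polynomialShift` shows that the generic substitution suffices. -/
def quillenIdeal (M : Matrix ι κ A[X]) : Ideal A where
  carrier := {s | ∀ (B : Type u) [CommRing B] [Algebra A B] (x y : B),
    ∃ ε ∈ elementaryMonoid ι B, ε * M.map (aeval x) = M.map (aeval (x + algebraMap A B s * y))}
  add_mem' {s t} hs ht B _ _ x y := by
    obtain ⟨ε, hε, h⟩ := hs B x y
    obtain ⟨δ, hδ, h'⟩ := ht B (x + algebraMap A B s * y) y
    refine ⟨δ * ε, mul_mem hδ hε, ?_⟩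
    rw [Matrix.mul_assoc, h, h', map_add, add_mul, add_assoc]
  zero_mem' B _ _ x y := ⟨1, one_mem _, by simp⟩
  smul_mem' c s hs B _ _ x y := by
    obtain ⟨ε, hε, h⟩ := hs B x (algebraMap A B c * y)
    exact ⟨ε, hε, by rw [h, smul_eq_mul, map_mul, mul_assoc, mul_left_comm (algebraMap A B c)]⟩

lemma mem_quillenIdeal_of_polynomialShift {M : Matrix ι κ A[X]} {s : A}
    {ε : Matrix ι ι A[X][X]} (hε : ε ∈ elementaryMonoid ι A[X][X])
    (h : ε * M.map C = M.map (polynomialShift s)) : s ∈ quillenIdeal M := by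
  intro B _ _ x y
  let f : A[X][X] →+* B := eval₂RingHom (aeval x : A[X] →ₐ[A] B) y
  have hC : f.comp C = aeval (R := A) x := by
    ext <;> simp [f]
  have hshift : f.comp (polynomialShift s) = aeval (R := A) (x + algebraMap A B s * y) := by
    ext <;> simp [f, polynomialShift]
  refine ⟨ε.map f, elementaryMonoid.map_mem f hε, ?_⟩
  have hf := congr_arg (fun N => N.map f) h
  rwa [Matrix.map_mul, Matrix.map_map, Matrix.map_map, ← RingHom.coe_comp, ← RingHom.coe_comp, hC,
    hshift] at hf

lemma exists_mul_map_C_eq_map_polynomialShift_one {M : Matrix ι κ A[X]} {σ : Matrix ι ι A[X]}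
    (hσ : σ ∈ elementaryMonoid ι A[X]) (h : σ * M = M.map (C.comp (evalRingHom 0))) :
    ∃ θ ∈ elementaryMonoid ι A[X][X],
      θ.map (evalRingHom 0) = 1 ∧ θ * M.map C = M.map (polynomialShift 1) := by
  set τ := polynomialShift (1 : A)
  have hστ : σ.map τ ∈ elementaryMonoid ι A[X][X] := elementaryMonoid.map_mem τ hσ
  refine ⟨(σ.map τ)⁻¹ * σ.map C,
    mul_mem (elementaryMonoid.inv_mem hστ) (elementaryMonoid.map_mem C hσ), ?_, ?_⟩
  · have hC : (evalRingHom (0 : A[X])).comp C = (evalRingHom 0).comp τ := by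
      ext <;> simp [τ, polynomialShift]
    have hσC : (σ.map C).map (evalRingHom (0 : A[X])) = (σ.map τ).map (evalRingHom 0) := by
      rw [Matrix.map_map, Matrix.map_map, ← RingHom.coe_comp, hC, RingHom.coe_comp]
    rw [Matrix.map_mul, hσC, ← Matrix.map_mul, elementaryMonoid.inv_mul_self hστ,
      Matrix.map_one _ (map_zero _) (map_one _)]
  · have hconst : C.comp (C.comp (evalRingHom 0)) = τ.comp (C.comp (evalRingHom 0)) := by
      ext <;> simp [τ, polynomialShift]
    have hC := congr_arg (fun N => N.map (C : A[X] →+* A[X][X])) h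
    have hτ := congr_arg (fun N => N.map τ) h
    simp only [Matrix.map_mul, Matrix.map_map, ← RingHom.coe_comp, hconst] at hC hτ
    rw [Matrix.mul_assoc, hC, ← hτ, ← Matrix.mul_assoc, elementaryMonoid.inv_mul_self hστ,
      Matrix.one_mul]

lemma map_C_le_nonZeroDivisors {S : Submonoid A} (hS : S ≤ nonZeroDivisors A) :
    S.map C ≤ nonZeroDivisors A[X] := by
  rintro _ ⟨s, hs, rfl⟩
  refine mem_nonZeroDivisors_iff_right.mpr fun p hp => ?_
  ext n
  exact (mem_nonZeroDivisors_iff_right.mp (hS hs)) _ (by simpa using congr_arg (coeff · n) hp)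

lemma exists_mem_quillenIdeal_of_isLocalization {S : Submonoid A} (hS : S ≤ nonZeroDivisors A)
    {B : Type v} [CommRing B] [Algebra A B] [IsLocalization S B] (hι : 2 < Fintype.card ι)
    {M : Matrix ι κ A[X]} {σ : Matrix ι ι B[X]} (hσ : σ ∈ elementaryMonoid ι B[X])
    (h : σ * M.map (mapRingHom (algebraMap A B)) =
      (M.map (mapRingHom (algebraMap A B))).map (C.comp (evalRingHom 0))) :
    ∃ s ∈ S, s ∈ quillenIdeal M := by
  let φ := mapRingHom (algebraMap A B)
  have hφ : Function.Injective φ := map_injective _ (IsLocalization.injective B hS)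
  obtain ⟨θ, hθ, hθ0, hθM⟩ := exists_mul_map_C_eq_map_polynomialShift_one hσ h
  let := Polynomial.algebra A B
  have := Polynomial.isLocalization S B
  obtain ⟨_, ⟨s, hs, rfl⟩, Θ, hΘ, hΘθ⟩ :=
    elementaryMonoid.exists_map_eq_map_compRingHom_C_mul_X (map_C_le_nonZeroDivisors hS) hι hθ hθ0
  refine ⟨s, hs, mem_quillenIdeal_of_polynomialShift hΘ ?_⟩
  let Y := compRingHom (C (φ (C s)) * X)
  replace hΘθ : Θ.map (mapRingHom φ) = θ.map Y := hΘθ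
  have hC : (mapRingHom φ).comp C = Y.comp (C.comp φ) := by
    ext <;> simp [φ, Y]
  have hshift : (mapRingHom φ).comp (polynomialShift s) =
      Y.comp ((polynomialShift 1).comp φ) := by
    ext <;> simp [φ, Y, polynomialShift]
  refine Matrix.map_injective (map_injective φ hφ) ?_
  change (Θ * M.map C).map (mapRingHom φ) = (M.map (polynomialShift s)).map (mapRingHom φ)
  calc (Θ * M.map C).map (mapRingHom φ) = θ.map Y * ((M.map φ).map C).map Y := by
        rw [Matrix.map_mul, hΘθ]
        simp only [Matrix.map_map, ← RingHom.coe_comp, hC]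
    _ = ((M.map φ).map (polynomialShift 1)).map Y := by rw [← Matrix.map_mul, hθM]
    _ = _ := by
        simp only [Matrix.map_map, ← RingHom.coe_comp, hshift]

theorem exists_elementaryMonoid_mul_eq_map_eval_zero [IsDomain A] (hι : 2 < Fintype.card ι)
    (M : Matrix ι κ A[X])
    (hM : ∀ (m : Ideal A) [m.IsMaximal], ∃ ε ∈ elementaryMonoid ι (Localization.AtPrime m)[X],
      ε * M.map (mapRingHom (algebraMap A (Localization.AtPrime m))) =
        (M.map (mapRingHom (algebraMap A (Localization.AtPrime m)))).map
          (C.comp (evalRingHom 0))) :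
    ∃ ε ∈ elementaryMonoid ι A[X], ε * M = M.map (C.comp (evalRingHom 0)) := by
  have htop : quillenIdeal M = ⊤ := by
    by_contra hne
    obtain ⟨m, hm, hle⟩ := Ideal.exists_le_maximal _ hne
    obtain ⟨σ, hσ, h⟩ := hM m
    obtain ⟨s, hs, hsM⟩ := exists_mem_quillenIdeal_of_isLocalization
      m.primeCompl_le_nonZeroDivisors hι hσ h
    exact hs (hle hsM)
  obtain ⟨ε, hε, h⟩ := (Ideal.eq_top_iff_one _).mp htop A[X] X (-X)
  refine ⟨ε, hε, ?_⟩
  rw [map_one, one_mul, add_neg_cancel] at h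
  convert h using 2 <;> ext1 <;> simp [coeff_zero_eq_eval_zero, aeval_def, eval₂_at_zero]

end LocalGlobal

section Columns

open Matrix Polynomial

variable {ι R S : Type*} [Fintype ι] [CommRing R] [CommRing S]

/-- A column whose entries generate the unit ideal, as witnessed by a row `u` with `u ⬝ v = 1`. -/
def IsUnimodular (v : ι → R) : Prop :=
  ∃ u : ι → R, u ⬝ᵥ v = 1

lemma IsUnimodular.map {v : ι → R} (hv : IsUnimodular v) (f : R →+* S) :
    IsUnimodular (f ∘ v) := by
  obtain ⟨u, hu⟩ := hv
  exact ⟨f ∘ u, by rw [← f.map_dotProduct, hu, map_one]⟩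

lemma IsUnimodular.exists_ne_isUnit_coeff {A : Type*} [CommRing A] [IsLocalRing A]
    {v : ι → A[X]} (hv : IsUnimodular v) {i : ι} (hi : (v i).Monic) (hd : (v i).natDegree ≠ 0) :
    ∃ j ≠ i, ∃ n, IsUnit ((v j).coeff n) := by
  by_contra! hcon
  let f := mapRingHom (IsLocalRing.residue A)
  have hf (j : ι) (hj : j ≠ i) : f (v j) = 0 := by
    ext n
    simpa [f, IsLocalRing.residue_eq_zero_iff] using hcon j hj n
  obtain ⟨u, hu⟩ := hv.map f
  have hunit : IsUnit (f (v i)) := by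
    refine .of_mul_eq_one_right (u i) ?_
    rwa [dotProduct, Fintype.sum_eq_single i fun j hj => by simp [hf j hj]] at hu
  exact hd (hi.natDegree_map (IsLocalRing.residue A) ▸ natDegree_eq_zero_of_isUnit hunit)

variable [DecidableEq ι]

/-- Two columns are elementarily equivalent if they lie in the same orbit of `E_ι(R)`, which is the
relation generated by elementary row operations. -/
def ElementaryEquiv (v w : ι → R) : Prop :=
  ∃ ε ∈ elementaryMonoid ι R, ε *ᵥ v = w

namespace ElementaryEquiv

variable {u v w : ι → R}

lemma refl (v : ι → R) : ElementaryEquiv v v := ⟨1, one_mem _, one_mulVec v⟩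

lemma symm (h : ElementaryEquiv v w) : ElementaryEquiv w v := by
  obtain ⟨ε, hε, rfl⟩ := h
  exact ⟨ε⁻¹, elementaryMonoid.inv_mem hε, by simp [elementaryMonoid.inv_mul_self hε]⟩

lemma trans (huv : ElementaryEquiv u v) (hvw : ElementaryEquiv v w) : ElementaryEquiv u w := by
  obtain ⟨ε, hε, rfl⟩ := huv
  obtain ⟨δ, hδ, rfl⟩ := hvw
  exact ⟨δ * ε, mul_mem hδ hε, (mulVec_mulVec u δ ε).symm⟩

lemma map (h : ElementaryEquiv v w) (f : R →+* S) : ElementaryEquiv (f ∘ v) (f ∘ w) := by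
  obtain ⟨ε, hε, rfl⟩ := h
  exact ⟨ε.map f, elementaryMonoid.map_mem f hε, funext fun i => (f.map_mulVec ε v i).symm⟩

lemma const_smul (h : ElementaryEquiv v w) (a : R) : ElementaryEquiv (a • v) (a • w) := by
  obtain ⟨ε, hε, rfl⟩ := h
  exact ⟨ε, hε, mulVec_smul ε a v⟩

lemma isUnimodular (h : ElementaryEquiv v w) (hv : IsUnimodular v) : IsUnimodular w := by
  obtain ⟨ε, -, rfl⟩ := h.symm
  obtain ⟨u, hu⟩ := hv
  exact ⟨u ᵥ* ε, by rw [← dotProduct_mulVec, hu]⟩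

lemma add_smul (v : ι → R) {l : ι} {c : ι → R} (hc : c l = 0) :
    ElementaryEquiv v (v + v l • c) :=
  ⟨_, elementaryMonoid.one_add_vecMulVec_single_right_mem l hc, by
    simp [add_mulVec, vecMulVec_mulVec]⟩

lemma add_single_of_mem_span (v : ι → R) {i j l : ι} (hli : l ≠ i) (hlj : l ≠ j) {a : R}
    (ha : a ∈ Ideal.span {v i, v j}) : ElementaryEquiv v (v + Pi.single l a) := by
  obtain ⟨b, c, rfl⟩ := Ideal.mem_span_pair.mp ha
  refine ⟨1 + vecMulVec (Pi.single l 1) (Pi.single i b + Pi.single j c),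
    elementaryMonoid.one_add_vecMulVec_single_left_mem l (by simp [hli, hlj]), ?_⟩
  simp [add_mulVec, vecMulVec_mulVec, add_dotProduct, ← Pi.single_smul]

lemma single_of_apply_eq_one {i : ι} (hi : v i = 1) : ElementaryEquiv v (Pi.single i 1) := by
  convert add_smul v (l := i) (c := Pi.single i 1 - v) (by simp [hi])
  simp [hi]

lemma single_single (i j : ι) : ElementaryEquiv (Pi.single i (1 : R)) (Pi.single j 1) := by
  obtain rfl | hij := eq_or_ne i j
  · exact refl _
  · have h := add_single_of_mem_span (Pi.single i (1 : R)) hij.symm hij.symm (a := 1)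
      (by simp)
    exact h.trans (single_of_apply_eq_one (by simp [hij]))

lemma single_of_isUnit [Nontrivial ι] {i : ι} (hi : IsUnit (v i)) :
    ElementaryEquiv v (Pi.single i 1) := by
  obtain ⟨j, hji⟩ := exists_ne i
  have hj : 1 - v j ∈ Ideal.span {v i, v i} := by simp [Ideal.span_singleton_eq_top.mpr hi]
  exact ((add_single_of_mem_span v hji hji hj).trans (single_of_apply_eq_one (by simp))).trans
    (single_single j i)

end ElementaryEquiv

lemma elementaryEquiv_iff_replicateCol {v w : ι → R} : ElementaryEquiv v w ↔
    ∃ ε ∈ elementaryMonoid ι R, ε * replicateCol Unit v = replicateCol Unit w := by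
  simp only [← replicateCol_mulVec, replicateCol_inj, ElementaryEquiv]

variable {A : Type*} [CommRing A]

lemma exists_mem_span_pair_coeff_eq {f g : A[X]} {d i : ℕ} (hf : f.Monic)
    (hd : f.natDegree = d + 1) (hg : g.natDegree ≤ d) (hi : i ≤ d) :
    ∃ h ∈ Ideal.span {f, g}, h.natDegree ≤ d ∧ h.coeff d = g.coeff i := by
  induction hi using Nat.decreasingInduction generalizing g with
  | self => exact ⟨g, Ideal.subset_span (by simp), hg, rfl⟩
  | of_succ i _ ih =>
    have hg' : (X * g - C (g.coeff d) * f).natDegree ≤ d := by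
      refine natDegree_le_iff_coeff_eq_zero.mpr fun N hN => ?_
      obtain ⟨N, rfl⟩ := Nat.exists_eq_add_one_of_ne_zero (by lia : N ≠ 0)
      rw [coeff_sub, coeff_X_mul, coeff_C_mul]
      obtain rfl | hN' := (Nat.lt_succ_iff.mp hN).eq_or_lt
      · rw [← hd, hf.coeff_natDegree, mul_one, sub_self]
      · rw [coeff_eq_zero_of_natDegree_lt (hg.trans_lt hN'),
          coeff_eq_zero_of_natDegree_lt (p := f) (by lia), mul_zero, sub_zero]
    obtain ⟨h, hh, hhd, hhc⟩ := ih hg'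
    have hfI : f ∈ Ideal.span {f, g} := Ideal.subset_span (by simp)
    have hgI : g ∈ Ideal.span {f, g} := Ideal.subset_span (by simp)
    have hle : Ideal.span {f, X * g - C (g.coeff d) * f} ≤ Ideal.span {f, g} := by
      rw [Ideal.span_le, Set.pair_subset_iff]
      exact ⟨hfI, sub_mem (Ideal.mul_mem_left _ _ hgI) (Ideal.mul_mem_left _ _ hfI)⟩
    refine ⟨h + C (f.coeff (i + 1)) * g, add_mem (hle hh) (Ideal.mul_mem_left _ _ hgI),
      natDegree_add_le_of_degree_le hhd ((natDegree_C_mul_le _ _).trans hg), ?_⟩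
    rw [coeff_add, hhc, coeff_sub, coeff_X_mul, coeff_C_mul, coeff_C_mul]
    ring

lemma ElementaryEquiv.exists_natDegree_lt (v : ι → A[X]) {i : ι} (hi : (v i).Monic)
    (hd : (v i).natDegree ≠ 0) :
    ∃ w, ElementaryEquiv v w ∧ w i = v i ∧ ∀ j ≠ i, (w j).natDegree < (v i).natDegree := by
  let c : ι → A[X] := Function.update (fun j => -(v j /ₘ v i)) i 0
  refine ⟨v + v i • c, add_smul v (by simp [c]), by simp [c], fun j hj => ?_⟩
  have hj' : (v + v i • c) j = v j %ₘ v i := by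
    simp [c, hj, modByMonic_eq_sub_mul_div, sub_eq_add_neg]
  exact hj' ▸ natDegree_modByMonic_lt _ hi fun h => hd (by simp [h])

lemma ElementaryEquiv.exists_monic_natDegree_eq [IsLocalRing A] (hι : 2 < Fintype.card ι)
    {v : ι → A[X]} (hv : IsUnimodular v) {i : ι} {d : ℕ} (hi : (v i).Monic)
    (hd : (v i).natDegree = d + 1) (hvd : ∀ j ≠ i, (v j).natDegree ≤ d) :
    ∃ w l, ElementaryEquiv v w ∧ (w l).Monic ∧ (w l).natDegree = d := by
  obtain ⟨j, hji, n, hn⟩ := hv.exists_ne_isUnit_coeff hi (by lia)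
  have hnd : n ≤ d := (le_natDegree_of_ne_zero hn.ne_zero).trans (hvd j hji)
  obtain ⟨h, hh, hhd, hhc⟩ := exists_mem_span_pair_coeff_eq hi hd (hvd j hji) hnd
  obtain ⟨l, hli, hlj⟩ := exists_ne_ne_of_two_lt_card hι i j
  obtain ⟨a, ha⟩ := hn.dvd (a := 1 - (v l).coeff d)
  refine ⟨_, l, add_single_of_mem_span v hli hlj (Ideal.mul_mem_left _ (C a) hh), ?_⟩
  rw [Pi.add_apply, Pi.single_eq_same]
  have hdeg : (v l + C a * h).natDegree ≤ d :=
    natDegree_add_le_of_degree_le (hvd l hli) ((natDegree_C_mul_le _ _).trans hhd)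
  have hcoeff : (v l + C a * h).coeff d = 1 := by
    rw [coeff_add, coeff_C_mul, hhc, mul_comm, ← ha, add_sub_cancel]
  exact ⟨monic_of_natDegree_le_of_coeff_eq_one d hdeg hcoeff,
    natDegree_eq_of_le_of_coeff_ne_zero hdeg (hcoeff ▸ one_ne_zero)⟩

/-- **Horrocks' theorem** for columns. -/
theorem ElementaryEquiv.single_of_monic [IsLocalRing A] (hι : 2 < Fintype.card ι)
    {v : ι → A[X]} (hv : IsUnimodular v) {i : ι} (hi : (v i).Monic) :
    ElementaryEquiv v (Pi.single i 1) := by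
  induction hd : (v i).natDegree generalizing v i with
  | zero => exact single_of_apply_eq_one (hi.natDegree_eq_zero.mp hd)
  | succ d ih =>
    obtain ⟨w, hvw, hwi, hwd⟩ := exists_natDegree_lt v hi (by lia)
    obtain ⟨z, l, hwz, hzl, hzd⟩ := exists_monic_natDegree_eq hι (hvw.isUnimodular hv)
      (hwi ▸ hi) (hwi ▸ hd) fun j hj => by have := hwd j hj; lia
    have hvz := hvw.trans hwz
    exact (hvz.trans (ih (hvz.isUnimodular hv) hzl hzd)).trans (single_single l i)

end Columns

section TwoByTwo

open Matrix Polynomial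

lemma elementaryMonoid.submatrix_mem {ι κ R : Type*} [Fintype ι] [DecidableEq ι] [Fintype κ]
    [DecidableEq κ] [CommRing R] {M : Matrix ι ι R} (hM : M ∈ elementaryMonoid ι R) (σ : κ ≃ ι) :
    M.submatrix σ σ ∈ elementaryMonoid κ R := by
  refine apply_mem_of_transvection (reindexAlgEquiv R R σ.symm : Matrix ι ι R →* Matrix κ κ R)
    (fun i j hij c => ?_) hM
  convert transvection_mem (σ.symm.injective.ne hij) c using 1
  ext k l
  simp [transvection, one_apply, single_apply, Equiv.symm_apply_eq]

variable {R S : Type*} [CommRing R] [CommRing S] {n : ℕ}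

/-- The stabilisation `N ↦ 1 ⊕ N`, embedding `SL_n` into `SL_{n+1}`. The new index is placed first,
so that clearing the first column leaves a matrix of this form. -/
def oneSum : Matrix (Fin n) (Fin n) R →* Matrix (Fin (n + 1)) (Fin (n + 1)) R where
  toFun N := of (vecCons (vecCons 1 0) fun i => vecCons 0 (N i))
  map_one' := by
    ext i j
    cases i using Fin.cases <;> cases j using Fin.cases <;>
      simp [one_apply, (Fin.succ_ne_zero _).symm]
  map_mul' M N := by
    ext i j
    cases i using Fin.cases <;> cases j using Fin.cases <;>
      simp [mul_apply, Fin.sum_univ_succ]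

lemma oneSum_fin_two (a b c d : R) :
    oneSum !![a, b; c, d] = !![1, 0, 0; 0, a, b; 0, c, d] := by
  ext i j
  fin_cases i <;> fin_cases j <;> rfl

lemma oneSum_map (f : R →+* S) (N : Matrix (Fin n) (Fin n) R) :
    (oneSum N).map f = oneSum (N.map f) := by
  ext i j
  cases i using Fin.cases <;> cases j using Fin.cases <;> simp [oneSum]

lemma oneSum_fin_two_map (f : R →+* S) (a b c d : R) :
    (oneSum !![a, b; c, d]).map f = oneSum !![f a, f b; f c, f d] := by
  rw [oneSum_map]
  congr 1
  ext i j
  fin_cases i <;> fin_cases j <;> rfl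

lemma oneSum_mem {N : Matrix (Fin n) (Fin n) R} (hN : N ∈ elementaryMonoid (Fin n) R) :
    oneSum N ∈ elementaryMonoid (Fin (n + 1)) R := by
  refine elementaryMonoid.apply_mem_of_transvection oneSum (fun i j hij c => ?_) hN
  convert elementaryMonoid.transvection_mem ((Fin.succ_injective n).ne hij) c using 1
  ext k l
  cases k using Fin.cases <;> cases l using Fin.cases <;>
    simp [oneSum, transvection, one_apply, single_apply, (Fin.succ_ne_zero _).symm]

lemma oneSum_mul_transvection_mem_iff {N : Matrix (Fin n) (Fin n) R} {i j : Fin n} (hij : i ≠ j)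
    (t : R) : oneSum (N * transvection i j t) ∈ elementaryMonoid (Fin (n + 1)) R ↔
      oneSum N ∈ elementaryMonoid (Fin (n + 1)) R := by
  rw [map_mul, elementaryMonoid.mul_mem_cancel_right
    (oneSum_mem (elementaryMonoid.transvection_mem hij t))]

lemma oneSum_transvection_mul_mem_iff {N : Matrix (Fin n) (Fin n) R} {i j : Fin n} (hij : i ≠ j)
    (t : R) : oneSum (transvection i j t * N) ∈ elementaryMonoid (Fin (n + 1)) R ↔
      oneSum N ∈ elementaryMonoid (Fin (n + 1)) R := by
  rw [map_mul, elementaryMonoid.mul_mem_cancel_left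
    (oneSum_mem (elementaryMonoid.transvection_mem hij t))]

variable {a a' b c d : R}

lemma oneSum_add_mul_left_col_mem_iff (t : R) :
    oneSum !![a + t * b, b; c + t * d, d] ∈ elementaryMonoid (Fin 3) R ↔
      oneSum !![a, b; c, d] ∈ elementaryMonoid (Fin 3) R := by
  rw [← oneSum_mul_transvection_mem_iff (N := !![a, b; c, d]) (one_ne_zero (α := Fin 2)) t]
  congr! 2
  ext i j
  fin_cases i <;> fin_cases j <;> simp

lemma oneSum_add_mul_right_col_mem_iff (t : R) :
    oneSum !![a, b + t * a; c, d + t * c] ∈ elementaryMonoid (Fin 3) R ↔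
      oneSum !![a, b; c, d] ∈ elementaryMonoid (Fin 3) R := by
  rw [← oneSum_mul_transvection_mem_iff (N := !![a, b; c, d]) (zero_ne_one (α := Fin 2)) t]
  congr! 2
  ext i j
  fin_cases i <;> fin_cases j <;> simp

lemma oneSum_add_mul_top_row_mem_iff (t : R) :
    oneSum !![a + t * c, b + t * d; c, d] ∈ elementaryMonoid (Fin 3) R ↔
      oneSum !![a, b; c, d] ∈ elementaryMonoid (Fin 3) R := by
  rw [← oneSum_transvection_mul_mem_iff (N := !![a, b; c, d]) (zero_ne_one (α := Fin 2)) t]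
  congr! 2
  ext i j
  fin_cases i <;> fin_cases j <;> simp

lemma oneSum_add_mul_bottom_row_mem_iff (t : R) :
    oneSum !![a, b; c + t * a, d + t * b] ∈ elementaryMonoid (Fin 3) R ↔
      oneSum !![a, b; c, d] ∈ elementaryMonoid (Fin 3) R := by
  rw [← oneSum_transvection_mul_mem_iff (N := !![a, b; c, d]) (one_ne_zero (α := Fin 2)) t]
  congr! 2
  ext i j
  fin_cases i <;> fin_cases j <;> simp

lemma oneSum_mem_of_left_eq_one (h : d - b * c = 1) :
    oneSum !![1, b; c, d] ∈ elementaryMonoid (Fin 3) R := by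
  obtain rfl : d = 1 + b * c := by linear_combination h
  rw [← oneSum_add_mul_right_col_mem_iff (-b), ← oneSum_add_mul_bottom_row_mem_iff (-c)]
  convert one_mem (elementaryMonoid (Fin 3) R)
  rw [← map_one oneSum, one_fin_two]
  congr <;> ring

lemma oneSum_mem_of_isUnit_right (hb : IsUnit b) (h : a * d - b * c = 1) :
    oneSum !![a, b; c, d] ∈ elementaryMonoid (Fin 3) R := by
  obtain ⟨e, hbe⟩ := hb.dvd (a := 1 - a)
  have ha : a + e * b = 1 := by linear_combination -hbe
  rw [← oneSum_add_mul_left_col_mem_iff e, ha]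
  exact oneSum_mem_of_left_eq_one (by linear_combination h - d * ha)

lemma oneSum_mem_of_isUnit_left (ha : IsUnit a) (h : a * d - b * c = 1) :
    oneSum !![a, b; c, d] ∈ elementaryMonoid (Fin 3) R := by
  obtain ⟨e, hae⟩ := ha.dvd (a := 1 - b)
  have hb : b + e * a = 1 := by linear_combination -hae
  rw [← oneSum_add_mul_right_col_mem_iff e, hb]
  exact oneSum_mem_of_isUnit_right isUnit_one (by linear_combination h + c * hb)

/-- Multiplicativity of Mennicke symbols. -/
lemma oneSum_mul_mem (h : a * a' * d - b * c = 1)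
    (hP : oneSum !![a, b; c, a' * d] ∈ elementaryMonoid (Fin 3) R)
    (hQ : oneSum !![a', b; c, a * d] ∈ elementaryMonoid (Fin 3) R) :
    oneSum !![a * a', b; c, d] ∈ elementaryMonoid (Fin 3) R := by
  have hQ' : !![a * d, c, 0; b, a', 0; 0, 0, 1] ∈ elementaryMonoid (Fin 3) R := by
    convert elementaryMonoid.submatrix_mem hQ (Equiv.swap 0 2)
    rw [oneSum_fin_two]
    ext i j
    fin_cases i <;> fin_cases j <;> simp [Equiv.swap_apply_of_ne_of_ne]
  have h01 (t : R) : transvection 0 1 t ∈ elementaryMonoid (Fin 3) R :=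
    elementaryMonoid.transvection_mem (by decide) t
  have h02 (t : R) : transvection 0 2 t ∈ elementaryMonoid (Fin 3) R :=
    elementaryMonoid.transvection_mem (by decide) t
  have h20 (t : R) : transvection 2 0 t ∈ elementaryMonoid (Fin 3) R :=
    elementaryMonoid.transvection_mem (by decide) t
  have hPQ : !![a * d, c, 0; 0, a * a', b; -1, c * a', a' * d] ∈ elementaryMonoid (Fin 3) R := by
    convert mul_mem (mul_mem hP hQ') (h20 (-a))
    rw [oneSum_fin_two]
    ext i j
    fin_cases i <;> fin_cases j <;> simp
    linear_combination h
  have hclear : !![0, c + a * d * (c * a'), a * d * (a' * d); 0, a * a', b; -1, 0, 0] ∈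
      elementaryMonoid (Fin 3) R := by
    convert mul_mem (mul_mem (mul_mem (h02 (a * d)) hPQ) (h01 (c * a'))) (h02 (a' * d))
    ext i j
    fin_cases i <;> fin_cases j <;> simp
  rw [← oneSum_add_mul_bottom_row_mem_iff (c * d)]
  convert mul_mem (h02 (-1)) (mul_mem (h20 1) (mul_mem (h02 (-1)) hclear))
  rw [oneSum_fin_two]
  ext i j
  fin_cases i <;> fin_cases j <;> simp
  · ring
  · linear_combination -d * h

lemma oneSum_mem_of_isUnit_right_coeff_zero {m : ℕ}
    (ih : ∀ {a b c d : R[X]}, a.Monic → a * d - b * c = 1 → a.natDegree = m →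
      oneSum !![a, b; c, d] ∈ elementaryMonoid (Fin 3) R[X])
    {a b c d : R[X]} (ha : a.Monic) (had : a.natDegree = m + 1) (hb : IsUnit (b.coeff 0))
    (hbm : b.natDegree ≤ m) (h : a * d - b * c = 1) :
    oneSum !![a, b; c, d] ∈ elementaryMonoid (Fin 3) R[X] := by
  obtain ⟨t, ht⟩ := hb.dvd (a := -a.coeff 0)
  have hlt : (C t * b).natDegree < a.natDegree := by
    have := natDegree_C_mul_le t b
    lia
  have hmonic : (a + C t * b).Monic := ha.add_of_left (degree_lt_degree hlt)
  have hdeg : (a + C t * b).natDegree = m + 1 := by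
    rw [natDegree_add_eq_left_of_natDegree_lt hlt, had]
  rw [← oneSum_add_mul_left_col_mem_iff (C t)]
  have hdet : (a + C t * b) * d - b * (c + C t * d) = 1 := by linear_combination h
  obtain ⟨a', ha'⟩ : X ∣ a + C t * b :=
    X_dvd_iff.mpr (by rw [coeff_add, coeff_C_mul, mul_comm, ← ht, add_neg_cancel])
  rw [ha'] at hmonic hdeg hdet ⊢
  have hmonic' : a'.Monic := monic_X.of_mul_monic_left hmonic
  nontriviality R
  rw [natDegree_X_mul hmonic'.ne_zero, add_left_inj] at hdeg
  have hbX : b + -b.divX * X = C (b.coeff 0) := by linear_combination -divX_mul_X_add b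
  refine oneSum_mul_mem hdet ?_ (ih hmonic' (by linear_combination hdet) hdeg)
  rw [← oneSum_add_mul_right_col_mem_iff (-b.divX), hbX]
  exact oneSum_mem_of_isUnit_right (hb.map C) (by rw [← hbX]; linear_combination hdet)

lemma natDegree_right_le_of_mul_sub_mul_eq_one {m : ℕ} {a b c d : R[X]} (ha : a.Monic)
    (had : a.natDegree = m + 1) (hb : b.natDegree ≤ m) (hc : c.natDegree ≤ m)
    (h : a * d - b * c = 1) : d.natDegree ≤ m := by
  obtain rfl | hd := eq_or_ne d 0
  · simp
  have hbc : (1 + b * c).natDegree ≤ m + m :=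
    natDegree_add_le_of_degree_le (by simp) (natDegree_mul_le.trans (add_le_add hb hc))
  have hmul := ha.natDegree_mul' hd
  rw [show a * d = 1 + b * c by linear_combination h] at hmul
  lia

/-- **Murthy's theorem**. -/
theorem oneSum_mem_of_monic [IsLocalRing R] {a b c d : R[X]} (ha : a.Monic)
    (h : a * d - b * c = 1) : oneSum !![a, b; c, d] ∈ elementaryMonoid (Fin 3) R[X] := by
  induction hm : a.natDegree generalizing a b c d with
  | zero => exact oneSum_mem_of_isUnit_left (ha.natDegree_eq_zero.mp hm ▸ isUnit_one) h
  | succ m ih =>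
    wlog hbc : b.natDegree ≤ m ∧ c.natDegree ≤ m generalizing b c d with hred
    · have hmod (p : R[X]) : (p + -(p /ₘ a) * a).natDegree ≤ m := by
        have hlt := natDegree_modByMonic_lt p ha fun ha1 => by simp [ha1] at hm
        rw [modByMonic_eq_sub_mul_div] at hlt
        rw [neg_mul, ← sub_eq_add_neg, mul_comm]
        lia
      rw [← oneSum_add_mul_right_col_mem_iff (-(b /ₘ a)),
        ← oneSum_add_mul_bottom_row_mem_iff (-(c /ₘ a))]
      exact hred (by linear_combination h) ⟨hmod b, hmod c⟩
    obtain ⟨hb, hc⟩ := hbc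
    by_cases hb0 : IsUnit (b.coeff 0)
    · exact oneSum_mem_of_isUnit_right_coeff_zero ih ha hm hb0 hb h
    have hd := natDegree_right_le_of_mul_sub_mul_eq_one ha hm hb hc h
    have hd0 : IsUnit (d.coeff 0) := by
      have h0 : a.coeff 0 * d.coeff 0 + -(b.coeff 0 * c.coeff 0) = 1 := by
        simpa [mul_coeff_zero, sub_eq_add_neg] using congrArg (coeff · 0) h
      refine isUnit_of_mul_isUnit_right
        ((IsLocalRing.isUnit_or_isUnit_of_add_one h0).resolve_right fun hbc0 => hb0 ?_)
      exact isUnit_of_mul_isUnit_left (IsUnit.neg_iff _ |>.mp hbc0)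
    have hbd0 : IsUnit ((b + 1 * d).coeff 0) := by
      have hbd : IsUnit ((b + 1 * d).coeff 0 + -b.coeff 0) := by simpa using hd0
      exact (IsLocalRing.isUnit_or_isUnit_of_isUnit_add hbd).resolve_right
        fun hb0' => hb0 ((IsUnit.neg_iff _).mp hb0')
    have hlt : (1 * c).natDegree < a.natDegree := by rw [one_mul]; lia
    rw [← oneSum_add_mul_top_row_mem_iff 1]
    exact oneSum_mem_of_isUnit_right_coeff_zero ih (ha.add_of_left (degree_lt_degree hlt))
      (by rw [natDegree_add_eq_left_of_natDegree_lt hlt, hm]) hbd0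
      (natDegree_add_le_of_degree_le hb (by rwa [one_mul])) (by linear_combination h)

end TwoByTwo

section Pivots

open Matrix Polynomial

lemma IsUnimodular.of_comp_algebraMap {ι R : Type*} [Fintype ι] [CommRing R] {S : Submonoid R}
    (hS : S ≤ nonZeroDivisors R) (R' : Type*) [CommRing R'] [Algebra R R'] [IsLocalization S R']
    {v : ι → R} (hv : IsUnimodular (algebraMap R R' ∘ v)) {i : ι}
    (hi : ∀ s ∈ S, IsCoprime s (v i)) : IsUnimodular v := by
  classical
  obtain ⟨u, hu⟩ := hv
  obtain ⟨s, hs⟩ := IsLocalization.exist_integer_multiples_of_finite S u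
  choose y hy using hs
  have hyv : y ⬝ᵥ v = s := by
    refine IsLocalization.injective R' hS ?_
    rw [RingHom.map_dotProduct, ← mul_one (algebraMap R R' s), ← hu, ← smul_eq_mul,
      ← smul_dotProduct]
    congr 1
    ext k
    simpa [Algebra.smul_def] using hy k
  obtain ⟨a, b, hab⟩ := hi s s.2
  exact ⟨a • y + Pi.single i b, by simp [add_dotProduct, hyv, hab]⟩

variable {R : Type*} [CommRing R]

/-- An element `f` which may serve as a pivot in elementary reduction: every unimodular column of
length at least three with an entry equal to `f` reduces to a standard basis vector, and every
matrix of `SL₂(R)` with upper left entry `f` is stably elementary. -/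
structure IsPivot (f : R) : Prop where
  column {ι : Type} [Fintype ι] [DecidableEq ι] (hι : 2 < Fintype.card ι) {v : ι → R}
    (hv : IsUnimodular v) {i : ι} (hi : v i = f) : ElementaryEquiv v (Pi.single i 1)
  matrix {b c d : R} (h : f * d - b * c = 1) :
    oneSum !![f, b; c, d] ∈ elementaryMonoid (Fin 3) R

namespace IsPivot

lemma of_monic [IsLocalRing R] {p : R[X]} (hp : p.Monic) : IsPivot p where
  column hι _ hv _ hi := .single_of_monic hι hv (hi ▸ hp)
  matrix := oneSum_mem_of_monic hp

lemma of_ringEquiv {S : Type*} [CommRing S] (e : R ≃+* S) {f : R} (hf : IsPivot (e f)) :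
    IsPivot f where
  column hι v hv i hi := by
    have h := (hf.column hι (hv.map (e : R →+* S)) (i := i) (by simp [hi])).map (e.symm : S →+* R)
    convert h using 1
    · ext
      simp
    · ext j
      simp [Pi.single_apply, apply_ite e.symm]
  matrix {b c d} h := by
    have hmem := elementaryMonoid.map_mem (e.symm : S →+* R)
      (hf.matrix (b := e b) (c := e c) (d := e d) (by simp [← map_mul, ← map_sub, h]))
    rw [oneSum_fin_two_map] at hmem
    simpa using hmem

lemma isUnit_mul {f u : R} (hf : IsPivot f) (hu : IsUnit u) : IsPivot (u * f) where
  column {ι} _ _ hι v hv i hi := by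
    obtain ⟨u, rfl⟩ := hu
    have : Nontrivial ι := Fintype.one_lt_card_iff_nontrivial.mp (by lia)
    obtain ⟨w, hw⟩ := hv
    have hv' : IsUnimodular ((↑u⁻¹ : R) • v) := ⟨(u : R) • w, by simp [hw]⟩
    have h := (hf.column hι hv' (i := i) (by simp [hi])).const_smul u
    rw [smul_smul, u.mul_inv, one_smul] at h
    exact h.trans (.single_of_isUnit (by simp))
  matrix {b c d} h := by
    obtain ⟨u, rfl⟩ := hu
    have hdiag : oneSum !![(↑u⁻¹ : R), 0; 0, u] ∈ elementaryMonoid (Fin 3) R :=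
      oneSum_mem_of_isUnit_left u⁻¹.isUnit (by simp)
    have hu : (↑u⁻¹ : R) * u = 1 := u.inv_mul
    have hmul : !![(↑u⁻¹ : R), 0; 0, u] * !![u * f, b; c, d] = !![f, ↑u⁻¹ * b; u * c, u * d] := by
      simp
    rw [← elementaryMonoid.mul_mem_cancel_left hdiag, ← map_mul, hmul]
    exact hf.matrix (by linear_combination h - b * c * hu)

end IsPivot

end Pivots

section PivotsLocalGlobal

open Matrix Polynomial

lemma isUnit_C_comp_evalRingHom {R : Type*} [CommRing R] {p : R[X]} (h0 : IsUnit (p.coeff 0)) :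
    IsUnit ((C.comp (evalRingHom 0)) p) := by
  simpa [coeff_zero_eq_eval_zero] using h0

variable {A : Type*} [CommRing A] [IsDomain A]

lemma ElementaryEquiv.comp_evalRingHom_of_localization {ι : Type*} [Fintype ι] [DecidableEq ι]
    (hι : 2 < Fintype.card ι) {v : ι → A[X]}
    (hv : ∀ (m : Ideal A) [m.IsMaximal],
      let f := mapRingHom (algebraMap A (Localization.AtPrime m))
      ElementaryEquiv (f ∘ v) (C.comp (evalRingHom 0) ∘ f ∘ v)) :
    ElementaryEquiv v (C.comp (evalRingHom 0) ∘ v) := by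
  obtain ⟨ε, hε, hεv⟩ := exists_elementaryMonoid_mul_eq_map_eval_zero hι (replicateCol Unit v)
    fun m _ => by
      obtain ⟨ε, hε, hεv⟩ := elementaryEquiv_iff_replicateCol.mp (hv m)
      exact ⟨ε, hε, hεv⟩
  exact elementaryEquiv_iff_replicateCol.mpr ⟨ε, hε, hεv⟩

lemma elementaryMonoid.mem_of_localization {ι : Type*} [Fintype ι] [DecidableEq ι]
    (hι : 2 < Fintype.card ι) {M : Matrix ι ι A[X]}
    (h0 : M.map (C.comp (evalRingHom 0)) ∈ elementaryMonoid ι A[X])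
    (hM : ∀ (m : Ideal A) [m.IsMaximal],
      M.map (mapRingHom (algebraMap A (Localization.AtPrime m))) ∈
        elementaryMonoid ι (Localization.AtPrime m)[X]) :
    M ∈ elementaryMonoid ι A[X] := by
  obtain ⟨ε, hε, hεM⟩ := exists_elementaryMonoid_mul_eq_map_eval_zero hι M fun m _ =>
    ⟨_, mul_mem (map_mem (C.comp (evalRingHom 0)) (hM m)) (inv_mem (hM m)),
      by rw [mul_assoc, inv_mul_self (hM m), mul_one]⟩
  rwa [← mul_mem_cancel_left hε, hεM]

lemma IsPivot.of_localization {p : A[X]} (h0 : IsUnit (p.coeff 0))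
    (hp : ∀ (m : Ideal A) [m.IsMaximal],
      IsPivot (mapRingHom (algebraMap A (Localization.AtPrime m)) p)) : IsPivot p where
  column {ι} _ _ hι v hv i hi := by
    have : Nontrivial ι := Fintype.one_lt_card_iff_nontrivial.mp (by lia)
    refine (ElementaryEquiv.comp_evalRingHom_of_localization hι fun m _ => ?_).trans
      (.single_of_isUnit (i := i) ?_)
    · intro f
      have hev : IsUnit ((C.comp (evalRingHom 0)) (f p)) :=
        isUnit_C_comp_evalRingHom (by simpa [f] using h0.map (algebraMap A _))
      exact ((hp m).column hι (hv.map f) (i := i) (by simp [f, hi])).trans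
        (.symm (.single_of_isUnit (by simpa only [Function.comp_apply, hi] using hev)))
    · simpa only [Function.comp_apply, hi] using isUnit_C_comp_evalRingHom h0
  matrix {b c d} h := by
    refine elementaryMonoid.mem_of_localization (by simp) ?_ fun m _ => ?_
    · rw [oneSum_fin_two_map]
      exact oneSum_mem_of_isUnit_left (isUnit_C_comp_evalRingHom h0)
        (by rw [← map_mul, ← map_mul, ← map_sub, h, map_one])
    · rw [oneSum_fin_two_map]
      exact (hp m).matrix (by rw [← map_mul, ← map_mul, ← map_sub, h, map_one])

lemma IsPivot.of_monic_of_isUnit_coeff_zero {p : A[X]} (hp : p.Monic) (h0 : IsUnit (p.coeff 0)) :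
    IsPivot p :=
  of_localization h0 fun _ _ => of_monic (hp.map _)

end PivotsLocalGlobal

section PivotsInLocalizations

open Matrix Polynomial

variable {R : Type*} [CommRing R] {S : Submonoid R} (R' : Type*) [CommRing R'] [Algebra R R']
  [IsLocalization S R'] {f : R}

lemma exists_add_mul_eq_algebraMap (hf : ∀ s ∈ S, IsCoprime s f) (g : R') :
    ∃ (c : R') (r : R), g + c * algebraMap R R' f = algebraMap R R' r := by
  obtain ⟨⟨x, s⟩, hs⟩ := IsLocalization.surj S g
  obtain ⟨a, b, hab⟩ := hf s s.2
  refine ⟨-(g * algebraMap R R' b), a * x, ?_⟩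
  have hab' := congrArg (algebraMap R R') hab
  simp only [map_add, map_mul, map_one] at hab' ⊢
  linear_combination algebraMap R R' a * hs - g * hab'

lemma exists_eq_algebraMap_of_mul_eq (hf : ∀ s ∈ S, IsCoprime s f) {g : R'} {r : R}
    (hg : algebraMap R R' f * g = algebraMap R R' r) : ∃ d, g = algebraMap R R' d := by
  obtain ⟨⟨x, s⟩, hs⟩ := IsLocalization.surj S g
  obtain ⟨a, b, hab⟩ := hf s s.2
  refine ⟨a * x + b * r, ?_⟩
  have hab' := congrArg (algebraMap R R') hab
  simp only [map_add, map_mul, map_one] at hab' ⊢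
  linear_combination algebraMap R R' a * hs + algebraMap R R' b * hg - g * hab'

lemma IsPivot.map_algebraMap (hS : S ≤ nonZeroDivisors R) (hfS : ∀ s ∈ S, IsCoprime s f)
    (hf : IsPivot f) : IsPivot (algebraMap R R' f) where
  column hι v hv i hi := by
    choose c r hcr using exists_add_mul_eq_algebraMap R' hfS
    let c' := Function.update (c ∘ v) i 0
    let w := Function.update (r ∘ v) i f
    have hvw : ElementaryEquiv v (algebraMap R R' ∘ w) := by
      convert ElementaryEquiv.add_smul v (l := i) (c := c') (by simp [c'])
      ext k
      obtain rfl | hk := eq_or_ne k i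
      · simp [w, c', hi]
      · simp [w, c', hk, hi, ← hcr, mul_comm, Algebra.smul_def]
    have hw : IsUnimodular w :=
      .of_comp_algebraMap hS R' (hvw.isUnimodular hv) (i := i) (by simpa [w] using hfS)
    refine hvw.trans ?_
    convert (hf.column hι hw (i := i) (by simp [w])).map (algebraMap R R')
    ext k
    simp [Pi.single_apply, apply_ite (algebraMap R R')]
  matrix {b c d} h := by
    obtain ⟨s, b', hb⟩ := exists_add_mul_eq_algebraMap R' hfS b
    obtain ⟨t, c', hc⟩ := exists_add_mul_eq_algebraMap R' hfS c
    rw [← oneSum_add_mul_right_col_mem_iff s, ← oneSum_add_mul_bottom_row_mem_iff t, hb, hc]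
    have hdet : algebraMap R R' f * (d + s * c + t * algebraMap R R' b') -
        algebraMap R R' b' * algebraMap R R' c' = 1 := by
      rw [← hb, ← hc]
      linear_combination h
    generalize d + s * c + t * algebraMap R R' b' = e at hdet ⊢
    obtain ⟨e, rfl⟩ := exists_eq_algebraMap_of_mul_eq R' hfS (g := e) (r := 1 + b' * c')
      (by simp only [map_add, map_mul, map_one]; linear_combination hdet)
    rw [← oneSum_fin_two_map]
    refine elementaryMonoid.map_mem _ (hf.matrix (IsLocalization.injective R' hS ?_))
    simpa using hdet

end PivotsInLocalizations

section Reduction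

open Matrix

variable {R : Type*} [CommRing R]

lemma det_oneSum {n : ℕ} (N : Matrix (Fin n) (Fin n) R) : (oneSum N).det = N.det := by
  have hsub : (oneSum N).submatrix Fin.succ Fin.succ = N := rfl
  have hrow (j : Fin n) : oneSum N 0 j.succ = 0 := rfl
  have hone : oneSum N 0 0 = 1 := rfl
  simp [det_succ_row_zero, Fin.sum_univ_succ, hsub, hrow, hone]

lemma isUnimodular_col {ι : Type*} [Fintype ι] [DecidableEq ι] {M : Matrix ι ι R}
    (hM : M.det = 1) (j : ι) : IsUnimodular (M.col j) :=
  ⟨M.adjugate j, mul_apply'.symm.trans (by rw [adjugate_mul, hM, one_smul, one_apply_eq])⟩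

lemma exists_mem_elementaryMonoid_iff_oneSum_mem {n : ℕ}
    {M : Matrix (Fin (n + 1)) (Fin (n + 1)) R} (hM : M.det = 1)
    (hcol : ElementaryEquiv (M.col 0) (Pi.single 0 1)) :
    ∃ N : Matrix (Fin n) (Fin n) R, N.det = 1 ∧
      (M ∈ elementaryMonoid (Fin (n + 1)) R ↔ oneSum N ∈ elementaryMonoid (Fin (n + 1)) R) := by
  obtain ⟨ε, hε, hεM⟩ := hcol
  let r : Fin (n + 1) → R := vecCons 0 fun j => -(ε * M) 0 j.succ
  have hδ : 1 + vecMulVec (Pi.single 0 1) r ∈ elementaryMonoid (Fin (n + 1)) R :=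
    elementaryMonoid.one_add_vecMulVec_single_left_mem 0 (by simp [r])
  have hcol' (i) : (ε * M) i 0 = (Pi.single 0 1 : Fin (n + 1) → R) i := congrFun hεM i
  have hN : oneSum ((ε * M).submatrix Fin.succ Fin.succ) =
      ε * M * (1 + vecMulVec (Pi.single 0 1) r) := by
    have he : (ε * M) *ᵥ Pi.single 0 1 = Pi.single 0 1 := by
      rw [mulVec_single_one, ← hεM]
      rfl
    rw [mul_add, mul_one, mul_vecMulVec, he]
    ext i j
    cases i using Fin.cases <;> cases j using Fin.cases <;>
      simp [oneSum, hcol', r]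
  refine ⟨(ε * M).submatrix Fin.succ Fin.succ, ?_, ?_⟩
  · rw [← det_oneSum, hN, det_mul, det_mul, elementaryMonoid.det_eq_one hε,
      elementaryMonoid.det_eq_one hδ, hM, mul_one, mul_one]
  · rw [hN, elementaryMonoid.mul_mem_cancel_right hδ, elementaryMonoid.mul_mem_cancel_left hε]

variable [Nontrivial R]

lemma IsUnimodular.elementaryEquiv_single (hR : ∀ f : R, f ≠ 0 → IsPivot f) {ι : Type} [Fintype ι]
    [DecidableEq ι] (hι : 2 < Fintype.card ι) {v : ι → R} (hv : IsUnimodular v) (i : ι) :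
    ElementaryEquiv v (Pi.single i 1) := by
  obtain ⟨j, hj⟩ : ∃ j, v j ≠ 0 := by
    by_contra! h0
    obtain ⟨u, hu⟩ := hv
    simp [funext h0] at hu
  exact ((hR _ hj).column hι hv rfl).trans (.single_single j i)

lemma oneSum_mem_of_mul_sub_mul_eq_one (hR : ∀ f : R, f ≠ 0 → IsPivot f) {a b c d : R}
    (h : a * d - b * c = 1) :
    oneSum !![a, b; c, d] ∈ elementaryMonoid (Fin 3) R := by
  obtain rfl | ha := eq_or_ne a 0
  · have hc : c ≠ 0 := by
      rintro rfl
      simp at h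
    rw [← oneSum_add_mul_top_row_mem_iff 1]
    exact (hR _ (by simpa using hc)).matrix (by linear_combination h)
  · exact (hR a ha).matrix h

theorem mem_elementaryMonoid_of_det_eq_one (hR : ∀ f : R, f ≠ 0 → IsPivot f) {n : ℕ} (hn : 3 ≤ n)
    {M : Matrix (Fin n) (Fin n) R} (hM : M.det = 1) : M ∈ elementaryMonoid (Fin n) R := by
  induction n, hn using Nat.le_induction with
  | base =>
    obtain ⟨N, hN, hMN⟩ := exists_mem_elementaryMonoid_iff_oneSum_mem hM
      ((isUnimodular_col hM 0).elementaryEquiv_single hR (by simp) 0)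
    rw [hMN, eta_fin_two N]
    exact oneSum_mem_of_mul_sub_mul_eq_one hR (by rwa [det_fin_two] at hN)
  | succ n hn ih =>
    obtain ⟨N, hN, hMN⟩ := exists_mem_elementaryMonoid_iff_oneSum_mem hM
      ((isUnimodular_col hM 0).elementaryEquiv_single hR (by rw [Fintype.card_fin]; lia) 0)
    exact hMN.mpr (oneSum_mem (ih hN))

end Reduction

section LaurentPivots

open Polynomial LaurentPolynomial

variable {A : Type*} [CommRing A]

lemma isCoprime_X_pow_of_isUnit_coeff_zero {p : A[X]} (h0 : IsUnit (p.coeff 0)) (n : ℕ) :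
    IsCoprime (X ^ n) p := by
  obtain ⟨u, hu⟩ := h0.exists_left_inv
  refine IsCoprime.pow_left ⟨-(Polynomial.C u * p.divX), Polynomial.C u, ?_⟩
  have hC : Polynomial.C u * Polynomial.C (p.coeff 0) = 1 := by rw [← map_mul, hu, map_one]
  linear_combination hC - Polynomial.C u * divX_mul_X_add p

variable [IsDomain A]

lemma IsPivot.toLaurent {p : A[X]} (hp : p.Monic) (h0 : IsUnit (p.coeff 0)) :
    IsPivot (Polynomial.toLaurent p) := by
  rw [← LaurentPolynomial.algebraMap_eq_toLaurent]
  refine (of_monic_of_isUnit_coeff_zero hp h0).map_algebraMap A[T;T⁻¹] (S := .powers X)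
    (Submonoid.powers_le.mpr monic_X.mem_nonZeroDivisors) ?_
  rintro _ ⟨n, rfl⟩
  exact isCoprime_X_pow_of_isUnit_coeff_zero h0 n

lemma IsPivot.toLaurent_of_coeff {p : A[X]} (hp : p ≠ 0)
    (hc : ∀ i, p.coeff i = 0 ∨ IsUnit (p.coeff i)) : IsPivot (Polynomial.toLaurent p) := by
  obtain ⟨q, hpq, hXq⟩ := exists_eq_pow_rootMultiplicity_mul_and_not_dvd p hp 0
  rw [map_zero, sub_zero] at hpq hXq
  generalize rootMultiplicity 0 p = k at hpq
  subst hpq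
  have hq (i : ℕ) : q.coeff i = 0 ∨ IsUnit (q.coeff i) := by
    simpa [coeff_X_pow_mul] using hc (i + k)
  have h0 : IsUnit (q.coeff 0) := (hq 0).resolve_left (mt X_dvd_iff.mpr hXq)
  have hq0 : q ≠ 0 := right_ne_zero_of_mul hp
  obtain ⟨l, hl⟩ := (hq q.natDegree).resolve_left (leadingCoeff_ne_zero.mpr hq0)
  have hmonic : (Polynomial.C (↑l⁻¹ : A) * q).Monic := by
    rw [Monic, leadingCoeff_mul, leadingCoeff_C, leadingCoeff, ← hl, Units.inv_mul]
  have hpivot := ((toLaurent hmonic (by simpa using h0)).isUnit_mul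
    (l.isUnit.map LaurentPolynomial.C)).isUnit_mul (isUnit_T (k : ℤ))
  convert hpivot using 1
  rw [map_mul, toLaurent_X_pow, ← Polynomial.toLaurent_C, ← map_mul, ← mul_assoc,
    ← Polynomial.C_mul, Units.mul_inv, map_one, one_mul]

lemma IsPivot.of_laurentPolynomial_coeff {g : A[T;T⁻¹]} (hg : g ≠ 0)
    (hc : ∀ z, g.coeff z = 0 ∨ IsUnit (g.coeff z)) : IsPivot g := by
  obtain ⟨n, p, hp⟩ := exists_T_pow g
  have hcoeff (i : ℕ) : p.coeff i = g.coeff (i - n) := by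
    calc p.coeff i = (Polynomial.toLaurent p).coeff i := by
          rw [coeff_toLaurent]
          exact (Finsupp.mapDomain_apply Nat.cast_injective _ _).symm
      _ = g.coeff (i - n) := by
          rw [hp, T, AddMonoidAlgebra.coeff_mul_single_apply, mul_one, sub_eq_add_neg]
  have hp0 : p ≠ 0 := by
    rintro rfl
    rw [map_zero] at hp
    exact hg ((isUnit_T (n : ℤ)).mul_left_eq_zero.mp hp.symm)
  have hpivot := (toLaurent_of_coeff hp0 fun i => hcoeff i ▸ hc _).isUnit_mul (isUnit_T (-n : ℤ))
  rwa [hp, mul_comm, mul_T_assoc, add_neg_cancel, T_zero, mul_one] at hpivot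

end LaurentPivots

section Weights

open Polynomial

lemma exists_injOn_eval {R : Type*} [CommRing R] [IsDomain R] [Infinite R] (S : Finset R[X]) :
    ∃ x : R, Set.InjOn (eval x) (S : Set R[X]) := by
  classical
  obtain ⟨x, hx⟩ :=
    (S.offDiag.biUnion fun pq => (pq.1 - pq.2).roots.toFinset).exists_notMem
  refine ⟨x, fun p hp q hq hpq => by_contra fun hne => hx ?_⟩
  simp only [Finset.mem_biUnion, Finset.mem_offDiag, Multiset.mem_toFinset]
  exact ⟨(p, q), ⟨hp, hq, hne⟩, by simp [sub_ne_zero.mpr hne, hpq]⟩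

/-- The weight `∑ i, k i * x ^ i` of an exponent vector `k`; a suitable `x` separates any finitely
many exponents. -/
noncomputable def weight {m : ℕ} (x : ℤ) (k : Fin m →₀ ℤ) : ℤ :=
  (ofFn m k).eval x

lemma weight_succ {m : ℕ} (x : ℤ) (k : Fin (m + 1) →₀ ℤ) :
    weight x k = k 0 + x * weight x k.tail := by
  simp [weight, ofFn_eq_sum_monomial, eval_finsetSum, Fin.sum_univ_succ, Finset.mul_sum, pow_succ',
    Finsupp.tail_apply, mul_left_comm]

lemma exists_injOn_weight {m : ℕ} (S : Finset (Fin m →₀ ℤ)) :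
    ∃ x, Set.InjOn (weight x) (S : Set (Fin m →₀ ℤ)) := by
  classical
  obtain ⟨x, hx⟩ := exists_injOn_eval (S.image fun k : Fin m →₀ ℤ => ofFn m k)
  refine ⟨x, hx.comp (f := fun k : Fin m →₀ ℤ => ofFn m k)
    ((injective_ofFn m).comp DFunLike.coe_injective).injOn fun k hk => ?_⟩
  simpa using Finset.mem_image_of_mem (fun k : Fin m →₀ ℤ => ofFn m k) hk

/-- The change of basis of the exponent lattice that makes the weight the first coordinate; it is
unimodular because `k 0` enters the weight with coefficient `1`. -/
noncomputable def weightEquiv (m : ℕ) (x : ℤ) : (Fin (m + 1) →₀ ℤ) ≃+ ℤ × (Fin m →₀ ℤ) where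
  toFun k := (weight x k, k.tail)
  invFun a := .cons (a.1 - x * weight x a.2) a.2
  left_inv k := by simp [weight_succ]
  right_inv a := by simp [weight_succ]
  map_add' k l := by
    have htail : (k + l).tail = k.tail + l.tail := by ext; simp [Finsupp.tail_apply]
    simp [weight, htail]

end Weights

section Monomials

variable {K : Type*} [Field K]

lemma isUnit_addMonoidAlgebra_single {R N : Type*} [Semiring R] [AddGroup N] (k : N) {r : R}
    (hr : IsUnit r) : IsUnit (AddMonoidAlgebra.single k r) := by
  obtain ⟨u, rfl⟩ := hr
  refine isUnit_iff_exists.mpr ⟨.single (-k) ↑u⁻¹, ?_, ?_⟩ <;>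
    simp [AddMonoidAlgebra.single_mul_single, AddMonoidAlgebra.one_def]

lemma IsPivot.of_injOn_fst {N : Type*} [AddCommGroup N] [IsDomain (AddMonoidAlgebra K N)]
    {f : AddMonoidAlgebra K (ℤ × N)} (hf : f ≠ 0)
    (hinj : Set.InjOn Prod.fst (f.coeff.support : Set (ℤ × N))) : IsPivot f := by
  refine of_ringEquiv AddMonoidAlgebra.curryRingEquiv (of_laurentPolynomial_coeff (by simpa) ?_)
  intro z
  have hcoeff (k : N) : ((AddMonoidAlgebra.curryRingEquiv f).coeff z).coeff k = f.coeff (z, k) := by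
    simp [AddMonoidAlgebra.curryRingEquiv, AddMonoidAlgebra.curryAddEquiv]
  by_cases! h : ∃ k, f.coeff (z, k) ≠ 0
  · obtain ⟨k, hk⟩ := h
    have hsingle : (AddMonoidAlgebra.curryRingEquiv f).coeff z = .single k (f.coeff (z, k)) := by
      ext l
      rw [hcoeff, AddMonoidAlgebra.coeff_single]
      obtain rfl | hkl := eq_or_ne k l
      · simp
      · rw [Finsupp.single_eq_of_ne' hkl]
        by_contra hl
        have hzkl : (z, k) = (z, l) := hinj (by simpa using hk) (by simpa using hl) rfl
        exact hkl (congrArg Prod.snd hzkl)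
    exact .inr (hsingle ▸ isUnit_addMonoidAlgebra_single k (.mk0 _ hk))
  · left
    ext k
    simp [hcoeff, h]

theorem LaurentRing.isPivot_of_ne_zero {m : ℕ} {f : LaurentRing K (m + 1)} (hf : f ≠ 0) :
    IsPivot f := by
  obtain ⟨x, hx⟩ := exists_injOn_weight f.coeff.support
  refine .of_ringEquiv (AddMonoidAlgebra.domCongr K K (weightEquiv m x)).toRingEquiv
    (.of_injOn_fst (by simpa) ?_)
  have hsupp : ((AddMonoidAlgebra.domCongr K K (weightEquiv m x) f).coeff.support : Set _) =
      weightEquiv m x '' f.coeff.support := by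
    rw [AddMonoidAlgebra.domCongr_support, Finset.coe_map]
    rfl
  have hcomp : Set.InjOn (Prod.fst ∘ weightEquiv m x) (f.coeff.support : Set _) := hx
  exact hsupp ▸ hcomp.image_of_comp

end Monomials

lemma exists_mem_elemSL_coe_eq {n : ℕ} {R : Type*} [CommRing R] {M : Matrix (Fin n) (Fin n) R}
    (hM : M ∈ elementaryMonoid (Fin n) R) :
    ∃ g ∈ elemSL n R, (g : Matrix (Fin n) (Fin n) R) = M := by
  induction hM using Submonoid.closure_induction with
  | mem _ hM =>
    obtain ⟨i, j, c, hij, rfl⟩ := hM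
    exact ⟨⟨_, Matrix.det_transvection_of_ne i j hij c⟩,
      Subgroup.subset_closure ⟨i, j, c, hij, rfl⟩, rfl⟩
  | one => exact ⟨1, one_mem _, rfl⟩
  | mul _ _ _ _ hM hN =>
    obtain ⟨g, hg, rfl⟩ := hM
    obtain ⟨h, hh, rfl⟩ := hN
    exact ⟨g * h, mul_mem hg hh, Matrix.SpecialLinearGroup.coe_mul g h⟩

/-- `SL_n(K[x₁^{±1},…,x_m^{±1}]) = E_n(K[x₁^{±1},…,x_m^{±1}])` for a field `K` and `n ≥ 3`:
every Laurent polynomial matrix of determinant 1 over a field is a product of elementary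
matrices. -/
theorem SL_laurent_eq_elementary (n : ℕ) (hn : 3 ≤ n) (K : Type*) [Field K]
    (m : ℕ) (hm : 1 ≤ m) :
    ∀ g : Matrix.SpecialLinearGroup (Fin n) (LaurentRing K m),
      g ∈ elemSL n (LaurentRing K m) := by
  intro g
  obtain ⟨m, rfl⟩ := Nat.exists_eq_add_of_le' hm
  obtain ⟨h, hh, hhg⟩ := exists_mem_elemSL_coe_eq
    (mem_elementaryMonoid_of_det_eq_one (fun _ => LaurentRing.isPivot_of_ne_zero) hn g.det_coe)
  exact Subtype.ext hhg ▸ hh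
end
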